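/- arXiv:2405.15300 — 2 statements merged into one kernel-verified Lean document; each statement's English description precedes it below -/
import Mathlib

section
/- Let n ≥ 6 be a composite integer. Then every (n-1)-tuple of imprimitive subgroups of S_n is regular, and every (n-2)-tuple of imprimitive subgroups of A_n is regular; that is, R_imprim(S_n) ≤ n-1 and R_imprim(A_n) ≤ n-2. -/
/-!
An imprimitive subgroup lies in the stabilizer of a partition of `Fin n` into `b` parts of size `a`, and
conjugation moves this partition to any other one of the same shape. Conjugation by even permutations suffices,
since an odd permutation can be corrected by a transposition inside a part. So the task is to choose partitions of
given shapes such that only the identity (among even permutations, for `A_n`) preserves all of them.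

The argument keeps track of a colouring of `Fin n` that is invariant under every permutation preserving the
partitions chosen so far (`Reach`). An invariant colouring `c` and a new partition `f` give the refined invariant
colouring `prof c f`, in which a point remembers its colour and how many points of each colour lie in its part.

* Two partitions of any shapes can be chosen so that some point shares its parts in both with another point, and
  some point does not; this gives two colours (`exists_pair`).
* A colouring which is neither constant nor injective gains a colour from a suitable partition of any given shape
  (`exists_split`). Hence `k ≥ 2` partitions give `min k n` colours (`Reach.grow`).
* One more colour can be gained. If some shape has at least three parts, it is saved until `n - 3` colours are
  reached. The colour classes which are not singletons then have sizes `4`, or `3, 2`, or `2, 2, 2`, and three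
  parts suffice to gain two colours at once (`exists_split_two`). If all shapes have two parts, three explicit
  bisections give four colours (`reach_bisections`).

Thus `k` partitions give `k + 1` colours for `k = n - 2` and `k = n - 1` (`reach_univ`). A permutation preserving a
colouring with `n` colours is trivial, and one preserving a colouring with `n - 1` colours is trivial or a
transposition, hence trivial if it is even.
-/

/-- The conjugate `g H g⁻¹` of a subgroup `H` by an element `g`. -/
def conjSub {G : Type*} [Group G] (g : G) (H : Subgroup G) : Subgroup G :=
  H.map (MulAut.conj g).toMonoidHom

/-- A `k`-tuple of subgroups is regular if some intersection of conjugates is trivial. -/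
def IsRegularTuple {G : Type*} [Group G] {k : ℕ} (H : Fin k → Subgroup G) : Prop :=
  ∃ g : Fin k → G, (⨅ i, conjSub (g i) (H i)) = ⊥

/-- A subgroup `H ≤ Sym(Fin n)` is imprimitive: it is transitive on `Fin n` and
preserves a partition of `Fin n` into `b ≥ 2` parts of size `a ≥ 2` (with `n = a * b`). -/
def IsImprimitiveSub {n : ℕ} (H : Subgroup (Equiv.Perm (Fin n))) : Prop :=
  MulAction.IsPretransitive ↥H (Fin n) ∧
    ∃ a b : ℕ, 2 ≤ a ∧ 2 ≤ b ∧ n = a * b ∧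
      ∃ Parts : Set (Set (Fin n)), Setoid.IsPartition Parts ∧
        Parts.ncard = b ∧ (∀ P ∈ Parts, P.ncard = a) ∧
        ∀ h ∈ H, ∀ P ∈ Parts, (⇑h '' P) ∈ Parts

/-! ### Colourings and their refinements -/

/-- A labelling with labels `0, …, b - 1`, each used exactly `a` times: an ordered partition of `Fin n` into `b`
parts of size `a`. -/
def IsShape {n : ℕ} (a b : ℕ) (f : Fin n → ℕ) : Prop :=
  (∀ x, f x < b) ∧ ∀ j < b, {x | f x = j}.ncard = a

/-- `h` maps the fibres of `f` to fibres of `f`. -/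
def Preserves {n : ℕ} (h : Equiv.Perm (Fin n)) (f : Fin n → ℕ) : Prop :=
  ∀ x y, f x = f y ↔ f (h x) = f (h y)

/-- The number of colours used by a colouring. -/
noncomputable def numColors {n : ℕ} {γ : Type} (c : Fin n → γ) : ℕ := (Set.range c).ncard

/-- The refinement of the colouring `c` by the partition `f`: a point remembers its own colour and how many
points of each colour its part contains. -/
noncomputable def prof {n : ℕ} {γ : Type} (c : Fin n → γ) (f : Fin n → ℕ) (z : Fin n) : γ × (γ → ℕ) :=
  (c z, fun g => {w | f w = f z ∧ c w = g}.ncard)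

lemma prof_invariant {n : ℕ} {γ : Type} {c : Fin n → γ} {f : Fin n → ℕ} {h : Equiv.Perm (Fin n)}
    (hc : ∀ x, c (h x) = c x) (hf : Preserves h f) (x : Fin n) : prof c f (h x) = prof c f x := by
  refine Prod.ext (hc x) (funext fun g => ?_)
  change {w | f w = f (h x) ∧ c w = g}.ncard = {w | f w = f x ∧ c w = g}.ncard
  rw [← Set.ncard_image_of_injective {w | f w = f x ∧ c w = g} h.injective]
  congr 1
  ext w
  constructor
  · rintro ⟨h1, h2⟩
    refine ⟨h.symm w, ⟨(hf _ _).2 (by simpa using h1), ?_⟩, by simp⟩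
    rw [← hc]; simpa using h2
  · rintro ⟨v, ⟨h1, h2⟩, rfl⟩
    exact ⟨(hf _ _).1 h1, (hc v).trans h2⟩

lemma prof_ne {n : ℕ} {γ : Type} {c : Fin n → γ} {f : Fin n → ℕ} {x y w : Fin n}
    (h1 : f w = f x) (h2 : ∀ v, c v = c w → f v ≠ f y) : prof c f x ≠ prof c f y := by
  intro h
  have h3 : {v | f v = f x ∧ c v = c w}.ncard = {v | f v = f y ∧ c v = c w}.ncard :=
    congrFun (congrArg Prod.snd h) (c w)
  have h4 : {v | f v = f y ∧ c v = c w} = ∅ := by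
    ext v; simpa using fun h5 h6 => h2 v h6 h5
  rw [h4, Set.ncard_empty, Set.ncard_eq_zero] at h3
  exact (Set.eq_empty_iff_forall_notMem.1 h3 w) ⟨h1, rfl⟩

lemma numColors_mono {n : ℕ} {γ δ : Type} (c' : Fin n → δ) (φ : δ → γ) :
    numColors (φ ∘ c') ≤ numColors c' := by
  unfold numColors
  rw [Set.range_comp]
  exact Set.ncard_image_le (Set.finite_range c')

lemma numColors_le_prof {n : ℕ} {γ : Type} (c : Fin n → γ) (f : Fin n → ℕ) :
    numColors c ≤ numColors (prof c f) := numColors_mono (prof c f) Prod.fst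

lemma numColors_add_one {n : ℕ} {γ δ : Type} (c' : Fin n → δ) (φ : δ → γ) {x y : Fin n}
    (h : φ (c' x) = φ (c' y)) (hne : c' x ≠ c' y) : numColors (φ ∘ c') + 1 ≤ numColors c' := by
  unfold numColors
  have h1 : Set.range (φ ∘ c') ⊆ φ '' (Set.range c' \ {c' x}) := by
    rintro _ ⟨z, rfl⟩
    by_cases hz : c' z = c' x
    · exact ⟨c' y, ⟨⟨y, rfl⟩, fun e => hne e.symm⟩, by simp [hz, h]⟩
    · exact ⟨c' z, ⟨⟨z, rfl⟩, hz⟩, rfl⟩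
  have h2 := Set.ncard_le_ncard h1 (Set.toFinite _)
  have h3 := Set.ncard_image_le (f := φ) (s := Set.range c' \ {c' x}) (Set.toFinite _)
  have h4 := Set.ncard_sdiff_singleton_add_one (s := Set.range c') ⟨x, rfl⟩ (Set.toFinite _)
  omega

/-- Two splittings count twice, provided one of the new colours takes no part in the other splitting. -/
lemma numColors_add_two {n : ℕ} {γ δ : Type} (c' : Fin n → δ) (φ : δ → γ) {x y u v : Fin n}
    (h : φ (c' x) = φ (c' y)) (hne : c' x ≠ c' y) (h' : φ (c' u) = φ (c' v)) (hne' : c' u ≠ c' v)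
    (hu : c' u ≠ c' x) (hv : c' v ≠ c' x) : numColors (φ ∘ c') + 2 ≤ numColors c' := by
  let ψ : δ → γ × Prop := fun d => (φ d, d = c' x)
  have h1 := numColors_add_one (ψ ∘ c') Prod.fst (x := x) (y := y) h
    (fun e => by simpa [ψ, hne.symm] using congrArg Prod.snd e)
  have h2 := numColors_add_one c' ψ (x := u) (y := v) (Prod.ext h' (by simp [ψ, hu, hv])) hne'
  have h3 : φ ∘ c' = Prod.fst ∘ ψ ∘ c' := rfl
  rw [h3]; omega

/-! ### Partitions with prescribed parts -/

/-- A partial labelling which uses no label more than `a` times extends to a full one. -/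
lemma exists_shape_of_partial {n a b : ℕ} (hab : n = a * b) (S : Finset (Fin n)) (g : Fin n → ℕ)
    (hg : ∀ x ∈ S, g x < b) (hcard : ∀ j < b, (S.filter (g · = j)).card ≤ a) :
    ∃ f : Fin n → ℕ, IsShape a b f ∧ ∀ x ∈ S, f x = g x := by
  induction hk : n - S.card generalizing S g with
  | zero =>
    have hS : S = Finset.univ := by
      apply Finset.eq_univ_of_card
      have := S.card_le_univ
      simp at this ⊢; omega
    subst hS
    refine ⟨g, ⟨fun x => hg x (Finset.mem_univ _), fun j hj => ?_⟩, fun _ _ => rfl⟩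
    have hsum := Finset.card_eq_sum_card_fiberwise (s := (Finset.univ : Finset (Fin n)))
      (t := Finset.range b) (f := g) (fun x _ => by simpa using hg x (Finset.mem_univ _))
    have hsum2 : ∑ j ∈ Finset.range b, (Finset.univ.filter (g · = j)).card = ∑ j ∈ Finset.range b, a := by
      rw [← hsum]; simp [hab, mul_comm]
    have := (Finset.sum_eq_sum_iff_of_le (fun j hj => hcard j (by simpa using hj))).1 hsum2 j (by simpa using hj)
    rw [← this, ← Set.ncard_coe_finset]
    simp
  | succ k ih =>
    have hlt : S.card < n := by omega
    obtain ⟨x, hx⟩ : ∃ x, x ∉ S := by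
      by_contra! hall
      rw [Finset.eq_univ_of_forall hall] at hlt
      simp at hlt
    obtain ⟨j, hj, hja⟩ : ∃ j < b, (S.filter (g · = j)).card < a := by
      by_contra! hall
      have hsum := Finset.card_eq_sum_card_fiberwise (s := S)
        (t := Finset.range b) (f := g) (fun x hx => by simpa using hg x hx)
      have h2 : ∑ j ∈ Finset.range b, a ≤ ∑ j ∈ Finset.range b, (S.filter (g · = j)).card :=
        Finset.sum_le_sum fun j hj => hall j (by simpa using hj)
      rw [← hsum] at h2
      simp at h2
      rw [mul_comm] at h2
      omega
    have hgS : ∀ y ∈ S, Function.update g x j y = g y := fun y hy =>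
      Function.update_of_ne (by rintro rfl; exact hx hy) _ _
    obtain ⟨f, hf, hfS⟩ := ih (insert x S) (Function.update g x j)
      (by
        intro y hy
        rcases Finset.mem_insert.1 hy with rfl | hy
        · simpa using hj
        · rw [hgS y hy]; exact hg y hy)
      (by
        intro i hi
        have hcongr : S.filter (Function.update g x j · = i) = S.filter (g · = i) :=
          Finset.filter_congr fun y hy => by rw [hgS y hy]
        rw [Finset.filter_insert, hcongr]
        split_ifs with hxi
        · simp at hxi
          subst hxi
          exact (Finset.card_insert_le _ _).trans hja
        · exact hcard i hi)
      (by rw [Finset.card_insert_of_notMem hx]; omega)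
    exact ⟨f, hf, fun y hy => (hfS y (Finset.mem_insert_of_mem hy)).trans (hgS y hy)⟩

/-- Disjoint sets of size at most `a` lie in the parts number `0`, `1`, `2` of some partition; part `2` is only
used if there is one. -/
lemma exists_shape {n a b : ℕ} (hab : n = a * b) (hb : 2 ≤ b) (T₀ T₁ T₂ : Finset (Fin n))
    (h01 : ∀ x ∈ T₀, x ∉ T₁) (h02 : ∀ x ∈ T₀, x ∉ T₂) (h12 : ∀ x ∈ T₁, x ∉ T₂)
    (h0 : T₀.card ≤ a) (h1 : T₁.card ≤ a) (h2 : T₂.card ≤ a) (hb3 : T₂ = ∅ ∨ 3 ≤ b) :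
    ∃ f : Fin n → ℕ, IsShape a b f ∧ (∀ x ∈ T₀, f x = 0) ∧ (∀ x ∈ T₁, f x = 1) ∧
      ∀ x ∈ T₂, f x = 2 := by
  let g : Fin n → ℕ := fun x => if x ∈ T₀ then 0 else if x ∈ T₁ then 1 else 2
  have g0 : ∀ x ∈ T₀, g x = 0 := fun x hx => by simp [g, hx]
  have g1 : ∀ x ∈ T₁, g x = 1 := fun x hx => by
    have : x ∉ T₀ := fun h => h01 x h hx
    simp [g, hx, this]
  have g2 : ∀ x ∈ T₂, g x = 2 := fun x hx => by
    have h : x ∉ T₀ := fun h => h02 x h hx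
    have h' : x ∉ T₁ := fun h => h12 x h hx
    simp [g, h, h']
  obtain ⟨f, hf, hfS⟩ := exists_shape_of_partial hab (T₀ ∪ T₁ ∪ T₂) g
    (by
      intro x hx
      simp only [Finset.mem_union] at hx
      rcases hx with (hx | hx) | hx
      · rw [g0 x hx]; omega
      · rw [g1 x hx]; omega
      · rw [g2 x hx]
        rcases hb3 with h | h
        · simp [h] at hx
        · omega)
    (by
      intro j hj
      have key : ∀ T : Finset (Fin n), T.card ≤ a →
          (∀ x ∈ T₀ ∪ T₁ ∪ T₂, g x = j → x ∈ T) → ((T₀ ∪ T₁ ∪ T₂).filter (g · = j)).card ≤ a := by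
        intro T hT h
        refine (Finset.card_le_card fun x hx => ?_).trans hT
        exact h x (Finset.mem_filter.1 hx).1 (Finset.mem_filter.1 hx).2
      rcases lt_trichotomy j 1 with hj1 | rfl | hj1
      · refine key T₀ h0 fun x hx hgx => ?_
        simp only [Finset.mem_union] at hx
        rcases hx with (hx | hx) | hx
        · exact hx
        · rw [g1 x hx] at hgx; omega
        · rw [g2 x hx] at hgx; omega
      · refine key T₁ h1 fun x hx hgx => ?_
        simp only [Finset.mem_union] at hx
        rcases hx with (hx | hx) | hx
        · rw [g0 x hx] at hgx; omega
        · exact hx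
        · rw [g2 x hx] at hgx; omega
      · refine key T₂ h2 fun x hx hgx => ?_
        simp only [Finset.mem_union] at hx
        rcases hx with (hx | hx) | hx
        · rw [g0 x hx] at hgx; omega
        · rw [g1 x hx] at hgx; omega
        · exact hx)
  refine ⟨f, hf, fun x hx => ?_, fun x hx => ?_, fun x hx => ?_⟩
  · rw [hfS x (by simp [hx]), g0 x hx]
  · rw [hfS x (by simp [hx]), g1 x hx]
  · rw [hfS x (by simp [hx]), g2 x hx]

/-! ### Splitting colour classes -/

lemma exists_ne_of_two_le_numColors {n : ℕ} {γ : Type} {c : Fin n → γ} (h : 2 ≤ numColors c) (x : Fin n) :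
    ∃ z, c z ≠ c x := by
  by_contra! hall
  have : Set.range c ⊆ {c x} := by rintro _ ⟨z, rfl⟩; exact hall z
  have := Set.ncard_le_ncard this
  rw [Set.ncard_singleton] at this
  unfold numColors at h
  omega

/-- Every colouring which is neither constant nor injective is properly refined by some partition of the given
shape. -/
lemma exists_split {n a b : ℕ} (hn : 6 ≤ n) (hab : n = a * b) (ha : 2 ≤ a) (hb : 2 ≤ b) {γ : Type}
    (c : Fin n → γ) (h2 : 2 ≤ numColors c) (hlt : numColors c < n) :
    ∃ f : Fin n → ℕ, IsShape a b f ∧ numColors c + 1 ≤ numColors (prof c f) := by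
  classical
  suffices h : ∃ f : Fin n → ℕ, IsShape a b f ∧ ∃ x y, c x = c y ∧ prof c f x ≠ prof c f y by
    obtain ⟨f, hf, x, y, hxy, hne⟩ := h
    exact ⟨f, hf, numColors_add_one (prof c f) Prod.fst hxy hne⟩
  by_cases hbig : ∃ x, 3 ≤ (Finset.univ.filter (c · = c x)).card
  · -- A class of size at least `3`: some partition meets it in parts of different sizes.
    obtain ⟨x, hx⟩ := hbig
    obtain ⟨z, hz⟩ := exists_ne_of_two_le_numColors h2 x
    set O := Finset.univ.filter (c · = c x) with hO
    have memO : ∀ w, w ∈ O ↔ c w = c x := by simp [hO]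
    by_cases hOa : O.card ≤ a
    · obtain ⟨f, hf, f0, f1, -⟩ := exists_shape hab hb (O.erase x) {x} ∅ (by simp +contextual) (by simp) (by simp)
        ((Finset.card_erase_le).trans hOa) (by simp; omega) (by simp) (Or.inl rfl)
      have hcard : (O.erase x).card = O.card - 1 := Finset.card_erase_of_mem ((memO x).2 rfl)
      obtain ⟨y, hy⟩ : (O.erase x).Nonempty := Finset.card_pos.1 (by omega)
      have hyO := (memO y).1 (Finset.mem_of_mem_erase hy)
      refine ⟨f, hf, x, y, hyO.symm, fun h => ?_⟩
      have h3 : {v | f v = f x ∧ c v = c x}.ncard = {v | f v = f y ∧ c v = c x}.ncard :=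
        congrFun (congrArg Prod.snd h) (c x)
      have h4 : {v | f v = f x ∧ c v = c x} ⊆ {x} := by
        rintro v ⟨hv1, hv2⟩
        by_contra hvx
        have := f0 v (Finset.mem_erase.2 ⟨hvx, (memO v).2 hv2⟩)
        rw [this, f1 x (by simp)] at hv1
        omega
      have h5 : (↑(O.erase x) : Set (Fin n)) ⊆ {v | f v = f y ∧ c v = c x} := fun v hv =>
        ⟨(f0 v hv).trans (f0 y hy).symm, (memO v).1 (Finset.mem_of_mem_erase hv)⟩
      have h6 := Set.ncard_le_ncard h4
      have h7 := Set.ncard_le_ncard h5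
      rw [Set.ncard_singleton] at h6
      rw [Set.ncard_coe_finset] at h7
      omega
    · obtain ⟨O', hO', hO'a⟩ := Finset.exists_subset_card_eq (s := O) (n := a) (by omega)
      obtain ⟨y, hyO, hyO'⟩ := Finset.exists_mem_notMem_of_card_lt_card (s := O') (t := O) (by omega)
      have hzO' : z ∉ O' := fun h => hz ((memO z).1 (hO' h))
      obtain ⟨f, hf, f0, f1, -⟩ := exists_shape hab hb O' {y, z} ∅
        (by rintro w hw hw'
            simp only [Finset.mem_insert, Finset.mem_singleton] at hw'
            rcases hw' with rfl | rfl <;> contradiction)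
        (by simp) (by simp) hO'a.le (Finset.card_le_two.trans ha) (by simp) (Or.inl rfl)
      obtain ⟨t, ht⟩ : O'.Nonempty := Finset.card_pos.1 (by omega)
      have htO := (memO t).1 (hO' ht)
      have hyO := (memO y).1 hyO
      refine ⟨f, hf, t, y, htO.trans hyO.symm, fun h => ?_⟩
      have h3 : {v | f v = f t ∧ c v = c x}.ncard = {v | f v = f y ∧ c v = c x}.ncard :=
        congrFun (congrArg Prod.snd h) (c x)
      have h4 : {v | f v = f y ∧ c v = c x} ⊆ {v | f v = 1} \ {z} := by
        rintro v ⟨hv1, hv2⟩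
        refine ⟨by simpa [f1 y (by simp)] using hv1, ?_⟩
        rintro rfl
        exact hz hv2
      have h5 : (↑O' : Set (Fin n)) ⊆ {v | f v = f t ∧ c v = c x} := fun v hv =>
        ⟨(f0 v hv).trans (f0 t ht).symm, (memO v).1 (hO' hv)⟩
      have h6 := Set.ncard_le_ncard h4
      have h7 := Set.ncard_le_ncard h5
      have h8 := Set.ncard_sdiff_singleton_add_one (s := {v | f v = 1}) (a := z) (f1 z (by simp))
      have h9 := hf.2 1 (by omega)
      rw [Set.ncard_coe_finset] at h7
      omega
  · -- All classes have size at most `2`: `x` is put together with `z`, and `y` away from the class of `z`.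
    push Not at hbig
    obtain ⟨x, y, hxy, hne⟩ : ∃ x y, c x = c y ∧ x ≠ y := by
      by_contra! hall
      have hinj : Function.Injective c := fun x y h => hall x y h
      have : numColors c = n := by
        unfold numColors
        rw [← Set.image_univ, Set.ncard_image_of_injective _ hinj]
        simp [Set.ncard_univ]
      omega
    obtain ⟨z, hz⟩ := exists_ne_of_two_le_numColors h2 x
    set Z := Finset.univ.filter (c · = c z) with hZ
    have memZ : ∀ w, w ∈ Z ↔ c w = c z := by simp [hZ]
    have hZ2 : Z.card < 3 := hbig z
    have hxZ : x ∉ Z := fun h => hz ((memZ x).1 h).symm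
    have hyZ : y ∉ Z := fun h => hz (((memZ y).1 h).symm.trans hxy.symm)
    have hzy : z ≠ y := by rintro rfl; exact hz hxy.symm
    by_cases hb3 : 3 ≤ b
    · obtain ⟨f, hf, f0, f1, f2⟩ := exists_shape hab hb {x, z} {y} (Z.erase z)
        (by simp [hne, hzy]) (by simp [hxZ]) (by simp [hyZ])
        (Finset.card_le_two.trans ha) (by simp; omega) (Finset.card_erase_le.trans (by omega)) (Or.inr hb3)
      refine ⟨f, hf, x, y, hxy, prof_ne (w := z) (by rw [f0 z (by simp), f0 x (by simp)]) fun v hv => ?_⟩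
      rw [f1 y (by simp)]
      by_cases hvz : v = z
      · rw [hvz, f0 z (by simp)]; omega
      · rw [f2 v (Finset.mem_erase.2 ⟨hvz, (memZ v).2 hv⟩)]; omega
    · have ha3 : 3 ≤ a := by
        have : b = 2 := by omega
        subst this; omega
      obtain ⟨f, hf, f0, f1, -⟩ := exists_shape hab hb (insert x Z) {y} ∅
        (by
          intro w hw hwy
          rw [Finset.mem_singleton] at hwy
          subst hwy
          rcases Finset.mem_insert.1 hw with h | h
          · exact hne h.symm
          · exact hyZ h) (by simp) (by simp)
        ((Finset.card_insert_le _ _).trans (by omega)) (by simp; omega) (by simp) (Or.inl rfl)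
      refine ⟨f, hf, x, y, hxy, prof_ne (w := z) ?_ fun v hv => ?_⟩
      · rw [f0 z (by simp [memZ]), f0 x (by simp)]
      · rw [f1 y (by simp), f0 v (by simp [memZ, hv])]; omega

/-- The possible classes of a colouring of `Fin n` with `n - 3` colours: a class with at least three points and
two singletons, or a class with at least three points, a class with exactly two, and a singleton, or three
classes with exactly two points. -/
lemma class_cases {n : ℕ} (hn : 6 ≤ n) {γ : Type} (c : Fin n → γ) (hc : numColors c + 3 = n) :
    (∃ x₁ x₂ x₃ z w, x₁ ≠ x₂ ∧ x₁ ≠ x₃ ∧ x₂ ≠ x₃ ∧ c x₁ = c x₂ ∧ c x₂ = c x₃ ∧ c x₁ ≠ c z ∧ c x₁ ≠ c w ∧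
      c z ≠ c w ∧ (∀ t, c t = c z → t = z) ∧ ∀ t, c t = c w → t = w) ∨
    (∃ x₁ x₂ x₃ y₁ y₂ z, x₁ ≠ x₂ ∧ x₁ ≠ x₃ ∧ x₂ ≠ x₃ ∧ y₁ ≠ y₂ ∧ c x₁ = c x₂ ∧ c x₂ = c x₃ ∧ c y₁ = c y₂ ∧
      c x₁ ≠ c y₁ ∧ c x₁ ≠ c z ∧ c y₁ ≠ c z ∧ (∀ t, c t = c y₁ → t = y₁ ∨ t = y₂) ∧ ∀ t, c t = c z → t = z) ∨
    ∃ x₁ x₂ y₁ y₂ z₁ z₂, x₁ ≠ x₂ ∧ y₁ ≠ y₂ ∧ z₁ ≠ z₂ ∧ c x₁ = c x₂ ∧ c y₁ = c y₂ ∧ c z₁ = c z₂ ∧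
      c x₁ ≠ c y₁ ∧ c x₁ ≠ c z₁ ∧ c y₁ ≠ c z₁ ∧ (∀ t, c t = c x₁ → t = x₁ ∨ t = x₂) ∧
      ∀ t, c t = c y₁ → t = y₁ ∨ t = y₂ := by
  classical
  let F : γ → Finset (Fin n) := fun g => Finset.univ.filter (c · = g)
  let I : Finset γ := Finset.univ.image c
  have memF : ∀ g w, w ∈ F g ↔ c w = g := by simp [F]
  have hI : I.card + 3 = n := by
    rw [← hc]
    unfold numColors
    rw [← Set.ncard_coe_finset]
    simp [I]
  have hpos : ∀ g ∈ I, 1 ≤ (F g).card := by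
    intro g hg
    obtain ⟨x, -, rfl⟩ := Finset.mem_image.1 hg
    exact Finset.card_pos.2 ⟨x, (memF _ _).2 rfl⟩
  -- The excesses `|F g| - 1` of the classes add up to `3`.
  let e : γ → ℕ := fun g => (F g).card - 1
  have hsum : ∑ g ∈ I, e g = 3 := by
    have h1 := Finset.card_eq_sum_card_image c (Finset.univ : Finset (Fin n))
    have h2 : ∑ g ∈ I, (F g).card = ∑ g ∈ I, (e g + 1) :=
      Finset.sum_congr rfl fun g hg => by have := hpos g hg; simp only [e]; omega
    rw [Finset.sum_add_distrib] at h2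
    simp only [Finset.card_univ, Fintype.card_fin] at h1
    change n = ∑ g ∈ I, (F g).card at h1
    simp at h2
    omega
  have single : ∀ g ∈ I, e g = 0 → ∃ x, c x = g ∧ ∀ t, c t = g → t = x := by
    intro g hg h
    have h1 := hpos g hg
    obtain ⟨x, hx⟩ := Finset.card_eq_one.1 (show (F g).card = 1 by simp only [e] at h; omega)
    have : ∀ t, c t = g ↔ t = x := fun t => by rw [← memF, hx, Finset.mem_singleton]
    exact ⟨x, (this x).2 rfl, fun t => (this t).1⟩
  have pair : ∀ g ∈ I, e g = 1 → ∃ x y, x ≠ y ∧ c x = g ∧ c y = g ∧ ∀ t, c t = g → t = x ∨ t = y := by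
    intro g hg h
    have h1 := hpos g hg
    obtain ⟨x, y, hxy, hx⟩ := Finset.card_eq_two.1 (show (F g).card = 2 by simp only [e] at h; omega)
    have : ∀ t, c t = g ↔ t = x ∨ t = y := fun t => by
      rw [← memF, hx, Finset.mem_insert, Finset.mem_singleton]
    exact ⟨x, y, hxy, (this x).2 (Or.inl rfl), (this y).2 (Or.inr rfl), fun t => (this t).1⟩
  have triple : ∀ g ∈ I, 2 ≤ e g →
      ∃ x y z, x ≠ y ∧ x ≠ z ∧ y ≠ z ∧ c x = g ∧ c y = g ∧ c z = g := by
    intro g hg h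
    obtain ⟨x, hx, y, hy, z, hz, h1, h2, h3⟩ := Finset.two_lt_card.1 (show 2 < (F g).card by
      simp only [e] at h; omega)
    exact ⟨x, y, z, h1, h2, h3, (memF _ _).1 hx, (memF _ _).1 hy, (memF _ _).1 hz⟩
  by_cases hbig : ∃ g ∈ I, 2 ≤ e g
  · obtain ⟨g, hg, heg⟩ := hbig
    have hs1 := Finset.add_sum_erase I e hg
    have hc1 := Finset.card_erase_of_mem hg
    obtain ⟨x₁, x₂, x₃, h12, h13, h23, hx1, hx2, hx3⟩ := triple g hg heg
    by_cases h0 : ∀ k ∈ I.erase g, e k = 0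
    · left
      obtain ⟨k, hk, l, hl, hkl⟩ := Finset.one_lt_card.1 (show 1 < (I.erase g).card by omega)
      obtain ⟨z, hz, hz'⟩ := single k (Finset.mem_of_mem_erase hk) (h0 k hk)
      obtain ⟨w, hw, hw'⟩ := single l (Finset.mem_of_mem_erase hl) (h0 l hl)
      have hgk := (Finset.mem_erase.1 hk).1
      have hgl := (Finset.mem_erase.1 hl).1
      refine ⟨x₁, x₂, x₃, z, w, h12, h13, h23, hx1.trans hx2.symm, hx2.trans hx3.symm, ?_, ?_, ?_, ?_, ?_⟩
      · rw [hx1, hz]; exact hgk.symm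
      · rw [hx1, hw]; exact hgl.symm
      · rwa [hz, hw]
      · rwa [hz]
      · rwa [hw]
    · right; left
      push Not at h0
      obtain ⟨k, hk, hek⟩ := h0
      have hs2 := Finset.add_sum_erase (I.erase g) e hk
      have hc2 := Finset.card_erase_of_mem hk
      obtain ⟨l, hl⟩ := Finset.card_pos.1 (show 0 < ((I.erase g).erase k).card by omega)
      have hel := Finset.single_le_sum (f := e) (fun _ _ => Nat.zero_le _) hl
      obtain ⟨y₁, y₂, hy12, hy1, hy2, hy⟩ := pair k (Finset.mem_of_mem_erase hk) (by omega)
      have hl' := Finset.mem_of_mem_erase hl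
      obtain ⟨z, hz, hz'⟩ := single l (Finset.mem_of_mem_erase hl') (by omega)
      have hgk := (Finset.mem_erase.1 hk).1
      have hgl := (Finset.mem_erase.1 hl').1
      have hkl := (Finset.mem_erase.1 hl).1
      refine ⟨x₁, x₂, x₃, y₁, y₂, z, h12, h13, h23, hy12, hx1.trans hx2.symm, hx2.trans hx3.symm,
        hy1.trans hy2.symm, ?_, ?_, ?_, ?_, ?_⟩
      · rw [hx1, hy1]; exact hgk.symm
      · rw [hx1, hz]; exact hgl.symm
      · rw [hy1, hz]; exact hkl.symm
      · rwa [hy1]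
      · rwa [hz]
  · right; right
    push Not at hbig
    have hfil : 2 < (I.filter (e · = 1)).card := by
      have : ∑ g ∈ I, e g = ∑ g ∈ I, if e g = 1 then 1 else 0 :=
        Finset.sum_congr rfl fun g hg => by have := hbig g hg; split_ifs <;> omega
      rw [Finset.card_filter]
      omega
    obtain ⟨g, hg, k, hk, l, hl, hgk, hgl, hkl⟩ := Finset.two_lt_card.1 hfil
    rw [Finset.mem_filter] at hg hk hl
    obtain ⟨x₁, x₂, hx12, hx1, hx2, hx⟩ := pair g hg.1 hg.2
    obtain ⟨y₁, y₂, hy12, hy1, hy2, hy⟩ := pair k hk.1 hk.2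
    obtain ⟨z₁, z₂, hz12, hz1, hz2, -⟩ := pair l hl.1 hl.2
    refine ⟨x₁, x₂, y₁, y₂, z₁, z₂, hx12, hy12, hz12, hx1.trans hx2.symm, hy1.trans hy2.symm,
      hz1.trans hz2.symm, ?_, ?_, ?_, ?_, ?_⟩
    · rwa [hx1, hy1]
    · rwa [hx1, hz1]
    · rwa [hy1, hz1]
    · rwa [hx1]
    · rwa [hy1]

/-- With at least three parts, a colouring with exactly `n - 3` colours gains two colours at once. -/
lemma exists_split_two {n a b : ℕ} (hn : 6 ≤ n) (hab : n = a * b) (ha : 2 ≤ a) (hb : 3 ≤ b) {γ : Type}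
    (c : Fin n → γ) (hc : numColors c + 3 = n) :
    ∃ f : Fin n → ℕ, IsShape a b f ∧ numColors c + 2 ≤ numColors (prof c f) := by
  have two : ∀ x y : Fin n, ({x, y} : Finset (Fin n)).card ≤ a := fun x y => Finset.card_le_two.trans ha
  have one : ∀ x : Fin n, ({x} : Finset (Fin n)).card ≤ a := fun x => by simp; omega
  suffices h : ∃ f : Fin n → ℕ, IsShape a b f ∧ ∃ x y u v, c x = c y ∧ c u = c v ∧
      prof c f x ≠ prof c f y ∧ prof c f u ≠ prof c f v ∧ prof c f u ≠ prof c f x ∧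
      prof c f v ≠ prof c f x by
    obtain ⟨f, hf, x, y, u, v, hxy, huv, h1, h2, h3, h4⟩ := h
    exact ⟨f, hf, numColors_add_two (prof c f) Prod.fst hxy h1 huv h2 h3 h4⟩
  have fst_ne : ∀ {f : Fin n → ℕ} {x y : Fin n}, c x ≠ c y → prof c f x ≠ prof c f y :=
    fun h e => h (congrArg Prod.fst e)
  rcases class_cases hn c hc with
    ⟨x₁, x₂, x₃, z, w, h12, h13, h23, e12, e23, hxz, hxw, hzw, hz, hw⟩ |
    ⟨x₁, x₂, x₃, y₁, y₂, z, h12, h13, h23, hy12, e12, e23, ey12, hxy, hxz, hyz, hy, hz⟩ |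
    ⟨x₁, x₂, y₁, y₂, z₁, z₂, hx12, hy12, hz12, ex12, ey12, ez12, hxy, hxz, hyz, hx, hy⟩
  · have n1 : ∀ {p q : Fin n}, c p ≠ c q → p ≠ q := fun h e => h (congrArg c e)
    obtain ⟨f, hf, f0, f1, f2⟩ := exists_shape hab (by omega) {x₁, z} {x₂, w} {x₃} (by grind) (by grind)
      (by grind) (two _ _) (two _ _) (one _) (Or.inr hb)
    refine ⟨f, hf, x₁, x₂, x₂, x₃, e12, e23, prof_ne (w := z) (by grind) (by grind),
      prof_ne (w := w) (by grind) (by grind), (prof_ne (w := z) (by grind) (by grind)).symm,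
      (prof_ne (w := z) (by grind) (by grind)).symm⟩
  · obtain ⟨f, hf, f0, f1, f2⟩ := exists_shape hab (by omega) {x₁, x₂} {x₃, y₁} {y₂, z} (by grind) (by grind)
      (by grind) (two _ _) (two _ _) (two _ _) (Or.inr hb)
    refine ⟨f, hf, x₃, x₁, y₁, y₂, by grind, ey12, prof_ne (w := y₁) (by grind) (by grind),
      (prof_ne (w := z) (by grind) (by grind)).symm, fst_ne (by grind), fst_ne (by grind)⟩
  · obtain ⟨f, hf, f0, f1, f2⟩ := exists_shape hab (by omega) {x₁, y₁} {x₂, z₁} {y₂, z₂} (by grind) (by grind)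
      (by grind) (two _ _) (two _ _) (two _ _) (Or.inr hb)
    refine ⟨f, hf, x₁, x₂, y₁, y₂, ex12, ey12, prof_ne (w := y₁) (by grind) (by grind),
      prof_ne (w := x₁) (by grind) (by grind), fst_ne (by grind), fst_ne (by grind)⟩

/-! ### Invariant colourings -/

/-- Partitions of the shapes `(a i, b i)`, `i ∈ s`, can be chosen so that some colouring with at least `m` colours
is invariant under all permutations preserving them. -/
def Reach {ι : Type} (n : ℕ) (a b : ι → ℕ) (s : Finset ι) (m : ℕ) : Prop :=
  ∃ f : ι → Fin n → ℕ, (∀ i ∈ s, IsShape (a i) (b i) (f i)) ∧ ∃ (γ : Type) (c : Fin n → γ),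
    m ≤ numColors c ∧ ∀ h : Equiv.Perm (Fin n), (∀ i ∈ s, Preserves h (f i)) → ∀ x, c (h x) = c x

lemma Reach.insert_index {ι : Type} [DecidableEq ι] {n : ℕ} {a b : ι → ℕ} {s : Finset ι} {m m' : ℕ}
    (hs : Reach n a b s m) {i : ι} (hi : i ∉ s)
    (hstep : ∀ (γ : Type) (c : Fin n → γ), m ≤ numColors c →
      ∃ f : Fin n → ℕ, IsShape (a i) (b i) f ∧ m' ≤ numColors (prof c f)) :
    Reach n a b (insert i s) m' := by
  obtain ⟨f, hf, γ, c, hm, hinv⟩ := hs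
  obtain ⟨g, hg, hm'⟩ := hstep γ c hm
  have hne : ∀ j ∈ s, Function.update f i g j = f j := fun j hj =>
    Function.update_of_ne (by rintro rfl; exact hi hj) _ _
  refine ⟨Function.update f i g, fun j hj => ?_, _, prof c g, hm', fun h hh => ?_⟩
  · rcases Finset.mem_insert.1 hj with rfl | hj
    · simpa using hg
    · rw [hne j hj]; exact hf j hj
  · refine prof_invariant (hinv h fun j hj => ?_) ?_
    · rw [← hne j hj]; exact hh j (Finset.mem_insert_of_mem hj)
    · simpa using hh i (Finset.mem_insert_self _ _)

lemma exists_shape' {n a b : ℕ} (hab : n = a * b) (hb : 2 ≤ b) : ∃ f : Fin n → ℕ, IsShape a b f := by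
  obtain ⟨f, hf, -⟩ := exists_shape (n := n) hab hb ∅ ∅ ∅ (by simp) (by simp) (by simp) (by simp) (by simp)
    (by simp) (Or.inl rfl)
  exact ⟨f, hf⟩

/-- Every further partition yields a further colour. -/
lemma Reach.grow {ι : Type} [DecidableEq ι] {n : ℕ} (hn : 6 ≤ n) {a b : ι → ℕ} (hab : ∀ i, n = a i * b i)
    (ha : ∀ i, 2 ≤ a i) (hb : ∀ i, 2 ≤ b i) {s t : Finset ι} (hst : s ⊆ t) {m m' : ℕ} (hm : 2 ≤ m)
    (hs : Reach n a b s m) (hm'n : m' ≤ n) (hm' : m' + s.card ≤ m + t.card) : Reach n a b t m' := by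
  induction hk : t.card - s.card generalizing s m with
  | zero =>
    obtain rfl := Finset.eq_of_subset_of_card_le hst (by omega)
    obtain ⟨f, hf, γ, c, hc, h⟩ := hs
    exact ⟨f, hf, γ, c, by omega, h⟩
  | succ k ih =>
    obtain ⟨i, hit, his⟩ := Finset.exists_mem_notMem_of_card_lt_card (s := s) (t := t) (by omega)
    have hcard := Finset.card_insert_of_notMem his
    by_cases hmn : m < n
    · refine ih (s := insert i s) (m := m + 1) (Finset.insert_subset hit hst) (by omega) (hs.insert_index his ?_)
        (by omega) (by omega)
      intro γ c hc
      by_cases hlt : numColors c < n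
      · obtain ⟨f, hf, h⟩ := exists_split hn (hab i) (ha i) (hb i) c (hm.trans hc) hlt
        exact ⟨f, hf, by omega⟩
      · obtain ⟨f, hf⟩ := exists_shape' (hab i) (hb i)
        exact ⟨f, hf, by have := numColors_le_prof c f; omega⟩
    · refine ih (s := insert i s) (m := n) (Finset.insert_subset hit hst) (by omega) (hs.insert_index his ?_)
        (by omega) (by omega)
      intro γ c hc
      obtain ⟨f, hf⟩ := exists_shape' (hab i) (hb i)
      exact ⟨f, hf, by have := numColors_le_prof c f; omega⟩

/-- Whether a point shares its parts in both partitions with another point is invariant. -/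
lemma companion_invariant {n : ℕ} {f g : Fin n → ℕ} {h : Equiv.Perm (Fin n)} (hf : Preserves h f)
    (hg : Preserves h g) (z : Fin n) :
    (∃ w, w ≠ h z ∧ f w = f (h z) ∧ g w = g (h z)) ↔ ∃ w, w ≠ z ∧ f w = f z ∧ g w = g z := by
  constructor
  · rintro ⟨w, h1, h2, h3⟩
    refine ⟨h.symm w, fun e => h1 (by simp [← e]), (hf _ _).2 (by simpa using h2), (hg _ _).2 (by simpa using h3)⟩
  · rintro ⟨w, h1, h2, h3⟩
    exact ⟨h w, fun e => h1 (h.injective e), (hf _ _).1 h2, (hg _ _).1 h3⟩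

/-- Two partitions suffice for an invariant colouring with two colours. -/
lemma exists_pair {n a b a' b' : ℕ} (hn : 6 ≤ n) (hab : n = a * b) (ha : 2 ≤ a) (hb : 2 ≤ b)
    (hab' : n = a' * b') (ha' : 2 ≤ a') (hb' : 2 ≤ b') :
    ∃ f g : Fin n → ℕ, IsShape a b f ∧ IsShape a' b' g ∧ ∃ x u,
      (∃ w, w ≠ x ∧ f w = f x ∧ g w = g x) ∧ ¬ ∃ w, w ≠ u ∧ f w = f u ∧ g w = g u := by
  classical
  obtain ⟨f, hf⟩ := exists_shape' hab hb
  have hcard : ∀ j < b, (Finset.univ.filter (f · = j)).card = a := fun j hj => by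
    rw [← hf.2 j hj, ← Set.ncard_coe_finset]; simp
  have han : 2 * a ≤ n := by rw [hab]; nlinarith
  have han' : 2 * a' ≤ n := by rw [hab']; nlinarith
  -- `U` consists of the part of `u` together with `x` and `y`.
  obtain ⟨x, y, u, U, hxy, hux, huy, hfxy, hxU, hyU, hU, hUc⟩ : ∃ (x y u : Fin n) (U : Finset (Fin n)), x ≠ y ∧
      u ≠ x ∧ u ≠ y ∧ f x = f y ∧ x ∈ U ∧ y ∈ U ∧ (∀ w, f w = f u → w ∈ U) ∧ U.card + a' ≤ n + 1 := by
    by_cases ha3 : 3 ≤ a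
    · obtain ⟨x, hx, y, hy, u, hu, h1, h2, h3⟩ := Finset.two_lt_card.1
        (show 2 < (Finset.univ.filter (f · = 0)).card by rw [hcard 0 (by omega)]; omega)
      refine ⟨x, y, u, Finset.univ.filter (f · = 0), h1, h2.symm, h3.symm, ?_, hx, hy, ?_, ?_⟩
      · simp at hx hy; omega
      · simp at hu ⊢; intro w hw; omega
      · rw [hcard 0 (by omega)]; omega
    · obtain ⟨x, y, h1, hx⟩ := Finset.card_eq_two.1
        (show (Finset.univ.filter (f · = 0)).card = 2 by rw [hcard 0 (by omega)]; omega)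
      obtain ⟨u, v, h2, hu⟩ := Finset.card_eq_two.1
        (show (Finset.univ.filter (f · = 1)).card = 2 by rw [hcard 1 (by omega)]; omega)
      have hx' : ∀ w, f w = 0 ↔ w = x ∨ w = y := fun w => by simpa using Finset.ext_iff.1 hx w
      have hu' : ∀ w, f w = 1 ↔ w = u ∨ w = v := fun w => by simpa using Finset.ext_iff.1 hu w
      have fx := (hx' x).2 (Or.inl rfl)
      have fy := (hx' y).2 (Or.inr rfl)
      have fu := (hu' u).2 (Or.inl rfl)
      refine ⟨x, y, u, {x, y, u, v}, h1, ?_, ?_, ?_, by simp, by simp, ?_, ?_⟩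
      · rintro rfl; omega
      · rintro rfl; omega
      · rw [fx, fy]
      · intro w hw
        rw [fu, hu'] at hw
        simp only [Finset.mem_insert, Finset.mem_singleton]
        tauto
      · have := Finset.card_le_four (a := x) (b := y) (c := u) (d := v); omega
  obtain ⟨W, hWU, hW⟩ := Finset.exists_subset_card_eq (s := Uᶜ) (n := a' - 1)
    (by rw [Finset.card_compl, Fintype.card_fin]; omega)
  have hWU' : ∀ w ∈ W, w ∉ U := fun w hw => Finset.mem_compl.1 (hWU hw)
  have huU : u ∈ U := hU u rfl
  have huW : u ∉ W := fun h => hWU' u h huU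
  obtain ⟨g, hg, g0, g1, -⟩ := exists_shape hab' hb' {x, y} (insert u W) ∅ (by grind) (by simp) (by simp)
    (Finset.card_le_two.trans ha') (by rw [Finset.card_insert_of_notMem huW]; omega) (by simp) (Or.inl rfl)
  refine ⟨f, g, hf, hg, x, u, ⟨y, hxy.symm, hfxy.symm, by grind⟩, ?_⟩
  rintro ⟨w, hwu, hfw, hgw⟩
  -- the part of `u` is exactly `insert u W`, which has size `a'`
  have hpart : insert u W = Finset.univ.filter (g · = 1) := by
    apply Finset.eq_of_subset_of_card_le
    · intro w hw; simpa using g1 w hw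
    · rw [Finset.card_insert_of_notMem huW, hW, ← Set.ncard_coe_finset]
      have := hg.2 1 (by omega)
      simp only [Finset.coe_filter, Finset.mem_univ, true_and]
      omega
  have : w ∈ insert u W := by
    rw [hpart]; simp [hgw, g1 u (by simp)]
  rcases Finset.mem_insert.1 this with h | h
  · exact hwu h
  · exact hWU' w h (hU w hfw)

lemma reach_pair {ι : Type} [DecidableEq ι] {n : ℕ} (hn : 6 ≤ n) {a b : ι → ℕ} (hab : ∀ i, n = a i * b i)
    (ha : ∀ i, 2 ≤ a i) (hb : ∀ i, 2 ≤ b i) {i j : ι} (hij : i ≠ j) : Reach n a b {i, j} 2 := by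
  obtain ⟨f, g, hf, hg, x, u, hx, hu⟩ := exists_pair hn (hab i) (ha i) (hb i) (hab j) (ha j) (hb j)
  refine ⟨fun k => if k = i then f else g, ?_, Prop,
    fun z => ∃ w, w ≠ z ∧ f w = f z ∧ g w = g z, ?_, fun h hh z => ?_⟩
  · intro k hk
    rcases Finset.mem_insert.1 hk with rfl | hk
    · simpa using hf
    · rw [Finset.mem_singleton] at hk
      subst hk
      simpa [hij.symm] using hg
  · unfold numColors
    refine (Set.one_lt_ncard (Set.toFinite _)).2 ⟨_, ⟨x, rfl⟩, _, ⟨u, rfl⟩, fun e => hu ?_⟩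
    exact e.mp hx
  · have h1 := hh i (by simp)
    have h2 := hh j (by simp)
    simp only [if_true, hij.symm, if_false] at h1 h2
    exact propext (companion_invariant h1 h2 z)

/-! ### Bisections -/

lemma isShape_bisection {n a : ℕ} (hn : n = a * 2) (T : Finset ℕ) (hT : T ⊆ Finset.range n)
    (hcard : T.card = a) : IsShape (n := n) a 2 (fun z => if z.val ∈ T then 0 else 1) := by
  have h0 : {z : Fin n | z.val ∈ T}.ncard = a := by
    rw [← hcard, ← Set.ncard_coe_finset, ← Set.ncard_image_of_injective _ Fin.val_injective]
    congr 1
    ext t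
    constructor
    · rintro ⟨z, hz, rfl⟩; exact hz
    · intro ht; exact ⟨⟨t, by simpa using hT ht⟩, ht, rfl⟩
  refine ⟨fun x => by dsimp only; split_ifs <;> omega, fun j hj => ?_⟩
  obtain rfl | rfl : j = 0 ∨ j = 1 := by omega
  · simpa using h0
  · have := Set.ncard_add_ncard_compl {z : Fin n | z.val ∈ T}
    have h1 : {z : Fin n | z.val ∈ T}ᶜ = {z : Fin n | (if z.val ∈ T then 0 else 1) = 1} := by
      ext z; simp
    rw [h0, h1] at this
    simp only [Nat.card_eq_fintype_card, Fintype.card_fin] at this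
    change {z : Fin n | (if z.val ∈ T then 0 else 1) = 1}.ncard = a
    omega

/-- Three bisections suffice for an invariant colouring with four colours. With `m = n / 2` they have the halves
`[0, m - 1]`, `[1, m]` and `[0, m - 2] ∪ {m}`. For the three pairs of bisections the points which share their parts
in both with no other point are `0` and `m`, `m - 1` and `m`, and `0` and `m - 1`. -/
lemma reach_bisections {ι : Type} [DecidableEq ι] {n : ℕ} (hn : 6 ≤ n) {a b : ι → ℕ}
    (hab : ∀ i, n = a i * b i) (hb : ∀ i, b i = 2) {i j k : ι} (hij : i ≠ j) (hik : i ≠ k) (hjk : j ≠ k) :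
    Reach n a b {i, j, k} 4 := by
  obtain ⟨m, hm⟩ : ∃ m, m = n / 2 := ⟨_, rfl⟩
  have ham : ∀ i, a i = m := fun i => by have := hab i; rw [hb i] at this; omega
  have hnm : n = m * 2 := by have := hab i; rw [hb i, ham i] at this; exact this
  let T₁ := Finset.Ico 0 m
  let T₂ := Finset.Ico 1 (m + 1)
  let T₃ := insert m (Finset.Ico 0 (m - 1))
  let f : Finset ℕ → Fin n → ℕ := fun T z => if z.val ∈ T then 0 else 1
  have m1 : ∀ z, z ∈ T₁ ↔ z < m := by simp [T₁]
  have m2 : ∀ z, z ∈ T₂ ↔ 1 ≤ z ∧ z ≤ m := by simp [T₂]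
  have m3 : ∀ z, z ∈ T₃ ↔ z = m ∨ z < m - 1 := by simp [T₃]
  have s1 : IsShape m 2 (f T₁) := isShape_bisection hnm T₁
    (fun z hz => by rw [m1] at hz; simp; omega) (by simp [T₁])
  have s2 : IsShape m 2 (f T₂) := isShape_bisection hnm T₂
    (fun z hz => by rw [m2] at hz; simp; omega) (by simp [T₂])
  have s3 : IsShape m 2 (f T₃) := isShape_bisection hnm T₃
    (fun z hz => by rw [m3] at hz; simp; omega)
    (by simp only [T₃]; rw [Finset.card_insert_of_notMem (by simp)]; simp; omega)
  let C : Finset ℕ → Finset ℕ → Fin n → Prop := fun S T z => ∃ w, w ≠ z ∧ f S w = f S z ∧ f T w = f T z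
  have hf : ∀ (T : Finset ℕ) (w z : Fin n), f T w = f T z ↔ (w.val ∈ T ↔ z.val ∈ T) := by
    intro T w z
    simp only [f]
    by_cases h1 : w.val ∈ T <;> by_cases h2 : z.val ∈ T <;> simp [h1, h2]
  have C12 : ∀ z, C T₁ T₂ z ↔ ¬ (z.val = 0 ∨ z.val = m) := by
    intro z
    simp only [C, hf, m1, m2]
    constructor
    · rintro ⟨w, h1, h2, h3⟩
      have := Fin.val_ne_of_ne h1
      omega
    · intro h
      have w : ∀ t : ℕ, t < n → t ≠ z.val → (t < m ↔ z.val < m) → (1 ≤ t ∧ t ≤ m ↔ 1 ≤ z.val ∧ z.val ≤ m) →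
          ∃ w : Fin n, w ≠ z ∧ (w.val < m ↔ z.val < m) ∧ (1 ≤ w.val ∧ w.val ≤ m ↔ 1 ≤ z.val ∧ z.val ≤ m) :=
        fun t ht h1 h2 h3 => ⟨⟨t, ht⟩, fun e => h1 (by rw [← e]), h2, h3⟩
      by_cases h1 : z.val = 1
      · exact w 2 (by omega) (by omega) (by omega) (by omega)
      by_cases h2 : z.val < m
      · exact w 1 (by omega) (by omega) (by omega) (by omega)
      by_cases h3 : z.val = m + 1
      · exact w (m + 2) (by omega) (by omega) (by omega) (by omega)
      · exact w (m + 1) (by omega) (by omega) (by omega) (by omega)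
  have C13 : ∀ z, C T₁ T₃ z ↔ ¬ (z.val = m - 1 ∨ z.val = m) := by
    intro z
    simp only [C, hf, m1, m3]
    constructor
    · rintro ⟨w, h1, h2, h3⟩
      have := Fin.val_ne_of_ne h1
      omega
    · intro h
      have w : ∀ t : ℕ, t < n → t ≠ z.val → (t < m ↔ z.val < m) → (t = m ∨ t < m - 1 ↔ z.val = m ∨ z.val < m - 1) →
          ∃ w : Fin n, w ≠ z ∧ (w.val < m ↔ z.val < m) ∧ (w.val = m ∨ w.val < m - 1 ↔ z.val = m ∨ z.val < m - 1) :=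
        fun t ht h1 h2 h3 => ⟨⟨t, ht⟩, fun e => h1 (by rw [← e]), h2, h3⟩
      by_cases h1 : z.val = 0
      · exact w 1 (by omega) (by omega) (by omega) (by omega)
      by_cases h2 : z.val < m
      · exact w 0 (by omega) (by omega) (by omega) (by omega)
      by_cases h3 : z.val = m + 1
      · exact w (m + 2) (by omega) (by omega) (by omega) (by omega)
      · exact w (m + 1) (by omega) (by omega) (by omega) (by omega)
  have C23 : ∀ z, C T₂ T₃ z ↔ ¬ (z.val = 0 ∨ z.val = m - 1) := by
    intro z
    simp only [C, hf, m2, m3]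
    constructor
    · rintro ⟨w, h1, h2, h3⟩
      have := Fin.val_ne_of_ne h1
      omega
    · intro h
      have w : ∀ t : ℕ, t < n → t ≠ z.val → (1 ≤ t ∧ t ≤ m ↔ 1 ≤ z.val ∧ z.val ≤ m) →
          (t = m ∨ t < m - 1 ↔ z.val = m ∨ z.val < m - 1) →
          ∃ w : Fin n, w ≠ z ∧ (1 ≤ w.val ∧ w.val ≤ m ↔ 1 ≤ z.val ∧ z.val ≤ m) ∧
            (w.val = m ∨ w.val < m - 1 ↔ z.val = m ∨ z.val < m - 1) :=
        fun t ht h1 h2 h3 => ⟨⟨t, ht⟩, fun e => h1 (by rw [← e]), h2, h3⟩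
      by_cases h1 : z.val = m
      · exact w 1 (by omega) (by omega) (by omega) (by omega)
      by_cases h2 : z.val < m
      · exact w m (by omega) (by omega) (by omega) (by omega)
      by_cases h3 : z.val = m + 1
      · exact w (m + 2) (by omega) (by omega) (by omega) (by omega)
      · exact w (m + 1) (by omega) (by omega) (by omega) (by omega)
  let c : Fin n → Prop × Prop × Prop := fun z => (C T₁ T₂ z, C T₁ T₃ z, C T₂ T₃ z)
  refine ⟨fun l => if l = i then f T₁ else if l = j then f T₂ else f T₃, ?_, _, c, ?_, fun h hh z => ?_⟩
  · intro l hl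
    rw [ham, hb]
    dsimp only
    split_ifs
    exacts [s1, s2, s3]
  · -- the points `0`, `1`, `m - 1` and `m` have pairwise different colours
    have hc : ∀ x y, c x = c y ↔ (C T₁ T₂ x ↔ C T₁ T₂ y) ∧ (C T₁ T₃ x ↔ C T₁ T₃ y) ∧ (C T₂ T₃ x ↔ C T₂ T₃ y) := by
      intro x y; simp [c, Prod.ext_iff]
    let p : Fin 4 → Fin n := ![⟨0, by omega⟩, ⟨1, by omega⟩, ⟨m - 1, by omega⟩, ⟨m, by omega⟩]
    have hinj : Function.Injective (c ∘ p) := by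
      intro x y hxy
      have := (hc (p x) (p y)).1 hxy
      simp only [C12, C13, C23] at this
      fin_cases x <;> fin_cases y <;> first | rfl | (exfalso; simp [p] at this; omega)
    have h1 : (Set.range (c ∘ p)).ncard = 4 := by
      rw [← Set.image_univ, Set.ncard_image_of_injective _ hinj]; simp [Set.ncard_univ]
    rw [← h1]
    exact Set.ncard_le_ncard (Set.range_comp_subset_range p c) (Set.toFinite _)
  · have h1 := hh i (by simp)
    have h2 := hh j (by simp)
    have h3 := hh k (by simp)
    simp only [if_true, hij.symm, hik.symm, hjk.symm, if_false] at h1 h2 h3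
    refine Prod.ext (propext ?_) (Prod.ext (propext ?_) (propext ?_))
    · exact companion_invariant h1 h2 z
    · exact companion_invariant h1 h3 z
    · exact companion_invariant h2 h3 z

/-! ### One more colour than partitions -/

/-- For `k ∈ {n - 2, n - 1}`, any `k` shapes admit partitions with an invariant colouring with `k + 1` colours. -/
lemma reach_univ {n k : ℕ} (hn : 6 ≤ n) {a b : Fin k → ℕ} (hab : ∀ i, n = a i * b i)
    (ha : ∀ i, 2 ≤ a i) (hb : ∀ i, 2 ≤ b i) (hk : k + 1 ≤ n) (hk' : n ≤ k + 2) :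
    Reach n a b Finset.univ (k + 1) := by
  by_cases hb3 : ∃ i, 3 ≤ b i
  · obtain ⟨i, hi⟩ := hb3
    obtain ⟨s, hs, hsc⟩ := Finset.exists_subset_card_eq (s := Finset.univ.erase i) (n := n - 3)
      (by rw [Finset.card_erase_of_mem (Finset.mem_univ _)]; simp; omega)
    have his : i ∉ s := fun h => by simpa using hs h
    obtain ⟨p, hp, q, hq, hpq⟩ := Finset.one_lt_card.1 (show 1 < s.card by omega)
    have h1 : Reach n a b s (n - 3) := (reach_pair hn hab ha hb hpq).grow hn hab ha hb (by grind) le_rfl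
      (by omega) (by rw [Finset.card_pair hpq]; omega)
    have h2 : Reach n a b (insert i s) (n - 1) := by
      refine h1.insert_index his fun γ c hc => ?_
      by_cases hc3 : numColors c + 3 = n
      · obtain ⟨f, hf, h⟩ := exists_split_two hn (hab i) (ha i) hi c hc3
        exact ⟨f, hf, by omega⟩
      by_cases hlt : numColors c < n
      · obtain ⟨f, hf, h⟩ := exists_split hn (hab i) (ha i) (hb i) c (by omega) hlt
        exact ⟨f, hf, by omega⟩
      · obtain ⟨f, hf⟩ := exists_shape' (hab i) (hb i)
        exact ⟨f, hf, by have := numColors_le_prof c f; omega⟩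
    refine h2.grow hn hab ha hb (Finset.subset_univ _) (by omega) hk ?_
    rw [Finset.card_insert_of_notMem his]
    simp; omega
  · push Not at hb3
    have hb2 : ∀ i, b i = 2 := fun i => by have := hb i; have := hb3 i; omega
    have h01 : (⟨0, by omega⟩ : Fin k) ≠ ⟨1, by omega⟩ := by simp
    have h02 : (⟨0, by omega⟩ : Fin k) ≠ ⟨2, by omega⟩ := by simp
    have h12 : (⟨1, by omega⟩ : Fin k) ≠ ⟨2, by omega⟩ := by simp
    refine (reach_bisections hn hab hb2 h01 h02 h12).grow hn hab ha hb (Finset.subset_univ _) (by omega) hk ?_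
    rw [Finset.card_eq_three.2 ⟨_, _, _, h01, h02, h12, rfl⟩]
    simp; omega

/-! ### From partitions to subgroups -/

/-- The partition preserved by an imprimitive subgroup, as a labelling. -/
lemma IsImprimitiveSub.exists_shape {n : ℕ} {H : Subgroup (Equiv.Perm (Fin n))} (hH : IsImprimitiveSub H) :
    ∃ (a b : ℕ) (p : Fin n → ℕ), 2 ≤ a ∧ 2 ≤ b ∧ n = a * b ∧ IsShape a b p ∧ ∀ h ∈ H, Preserves h p := by
  obtain ⟨-, a, b, ha, hb, hab, P, hP, hPb, hPa, hinv⟩ := hH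
  choose part hpart huniq using hP.2
  have hpartP : ∀ x, part x ∈ P := fun x => (hpart x).1
  have hmem : ∀ x, x ∈ part x := fun x => (hpart x).2
  have heq : ∀ x Q, Q ∈ P → x ∈ Q → Q = part x := fun x Q h1 h2 => huniq x Q ⟨h1, h2⟩
  have e : P ≃ Fin b := Finite.equivFinOfCardEq (by rw [Nat.card_coe_set_eq, hPb])
  let p : Fin n → ℕ := fun x => (e ⟨part x, hpartP x⟩).val
  have hp : ∀ x y, p x = p y ↔ part x = part y := fun x y => by
    simp only [p, Fin.val_inj, e.injective.eq_iff, Subtype.mk.injEq]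
  refine ⟨a, b, p, ha, hb, hab, ⟨fun x => (e _).isLt, fun j hj => ?_⟩, fun h hh x y => ?_⟩
  · rw [← hPa _ (e.symm ⟨j, hj⟩).2]
    congr 1
    ext x
    have : p x = j ↔ part x = (e.symm ⟨j, hj⟩ : Set (Fin n)) := by
      rw [← Subtype.coe_mk (part x) (hpartP x), ← Subtype.ext_iff, Equiv.eq_symm_apply, Fin.ext_iff]
    rw [Set.mem_ofPred_eq, this]
    exact ⟨fun h => h ▸ hmem x, fun h => (heq x _ (e.symm ⟨j, hj⟩).2 h).symm⟩
  · rw [hp, hp]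
    have himg : ∀ z, h '' part z = part (h z) := fun z =>
      heq _ _ (hinv h hh _ (hpartP z)) ⟨z, hmem z, rfl⟩
    rw [← himg, ← himg, h.injective.image_injective.eq_iff]

lemma IsShape.exists_perm {n a b : ℕ} {p f : Fin n → ℕ} (hp : IsShape a b p) (hf : IsShape a b f) :
    ∃ σ : Equiv.Perm (Fin n), ∀ x, f (σ x) = p x := by
  have h : ∀ j, Nonempty ({x // p x = j} ≃ {x // f x = j}) := by
    intro j
    by_cases hj : j < b
    · exact Finite.card_eq.1 ((hp.2 j hj).trans (hf.2 j hj).symm)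
    · have h1 : IsEmpty {x // p x = j} := ⟨fun x => hj (x.2 ▸ hp.1 x)⟩
      have h2 : IsEmpty {x // f x = j} := ⟨fun x => hj (x.2 ▸ hf.1 x)⟩
      exact ⟨Equiv.equivOfIsEmpty _ _⟩
  exact ⟨Equiv.ofFiberEquiv fun j => (h j).some, fun x => Equiv.ofFiberEquiv_map _ x⟩

/-- An odd permutation is corrected by a transposition inside a part. -/
lemma IsShape.exists_even_perm {n a b : ℕ} {p f : Fin n → ℕ} (ha : 2 ≤ a) (hb : 2 ≤ b) (hp : IsShape a b p)
    (hf : IsShape a b f) : ∃ σ : alternatingGroup (Fin n), ∀ x, f ((σ : Equiv.Perm (Fin n)) x) = p x := by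
  obtain ⟨σ, hσ⟩ := hp.exists_perm hf
  rcases Int.units_eq_one_or (Equiv.Perm.sign σ) with h | h
  · exact ⟨⟨σ, Equiv.Perm.mem_alternatingGroup.2 h⟩, hσ⟩
  · obtain ⟨x, hx, y, hy, hxy⟩ := (Set.one_lt_ncard (Set.toFinite _)).1
      (show 1 < {x | p x = 0}.ncard by rw [hp.2 0 (by omega)]; omega)
    refine ⟨⟨σ * Equiv.swap x y, Equiv.Perm.mem_alternatingGroup.2 ?_⟩, fun z => ?_⟩
    · simp [h, Equiv.Perm.sign_swap hxy]
    · change f (σ (Equiv.swap x y z)) = p z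
      rw [hσ]
      rcases eq_or_ne z x with rfl | h1
      · rw [Equiv.swap_apply_left]; exact hy.trans hx.symm
      rcases eq_or_ne z y with rfl | h2
      · rw [Equiv.swap_apply_right]; exact hx.trans hy.symm
      · rw [Equiv.swap_apply_of_ne_of_ne h1 h2]

lemma Preserves.conj {n : ℕ} {h σ : Equiv.Perm (Fin n)} {p f : Fin n → ℕ} (hp : Preserves h p)
    (hσ : ∀ x, f (σ x) = p x) : Preserves (σ * h * σ⁻¹) f := by
  intro x y
  have := hp (σ⁻¹ x) (σ⁻¹ y)
  rw [← hσ, ← hσ, ← hσ, ← hσ] at this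
  simpa using this

lemma numColors_id (n : ℕ) : numColors (id : Fin n → Fin n) = n := by
  simp [numColors, Set.ncard_univ]

/-- An even permutation preserving a colouring with `n - 1` colours is trivial. -/
lemma eq_one_of_even {n : ℕ} {γ : Type} (c : Fin n → γ) (hc : n ≤ numColors c + 1)
    {h : Equiv.Perm (Fin n)} (hh : ∀ x, c (h x) = c x) (heven : Equiv.Perm.sign h = 1) : h = 1 := by
  by_contra hne
  obtain ⟨x, hx⟩ : ∃ x, h x ≠ x := by
    by_contra! hall
    exact hne (Equiv.ext hall)
  -- two different pairs of points of the same colour would cost two colours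
  have key : ∀ z, h z ≠ z → z = x ∨ z = h x := by
    intro z hz
    by_contra! hzx
    have h1 := numColors_id n
    have h2 : c = c ∘ id := rfl
    by_cases h3 : h z = x
    · have := numColors_add_two id c (x := h x) (y := x) (u := z) (v := h z) (hh x) hx (hh z).symm hz.symm
        hzx.2 (by rw [h3]; exact hx.symm)
      rw [← h2] at this; omega
    · have := numColors_add_two id c (x := x) (y := h x) (u := z) (v := h z) (hh x).symm hx.symm (hh z).symm
        hz.symm hzx.1 h3
      rw [← h2] at this; omega
  have hsub : h.support ⊆ {x, h x} := fun z hz => by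
    simpa using key z (Equiv.Perm.mem_support.1 hz)
  have hle := (Finset.card_le_card hsub).trans Finset.card_le_two
  have hswap := Equiv.Perm.card_support_eq_two.1
    (le_antisymm hle (Equiv.Perm.two_le_card_support_of_ne_one hne))
  rw [hswap.sign_eq] at heven
  exact absurd heven (by decide)

lemma eq_one_of_colors {n : ℕ} {γ : Type} (c : Fin n → γ) (hc : n ≤ numColors c)
    {h : Equiv.Perm (Fin n)} (hh : ∀ x, c (h x) = c x) : h = 1 := by
  by_contra hne
  obtain ⟨x, hx⟩ : ∃ x, h x ≠ x := by
    by_contra! hall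
    exact hne (Equiv.ext hall)
  have h1 := numColors_add_one id c (x := h x) (y := x) (hh x) hx
  have h2 : c = c ∘ id := rfl
  rw [← h2, numColors_id] at h1
  omega

theorem regularity_of_imprimitive_tuples (n : ℕ) (hn : 6 ≤ n) (hcomp : ¬ n.Prime) :
    -- every (n-1)-tuple of imprimitive subgroups of Sₙ is regular
    (∀ H : Fin (n - 1) → Subgroup (Equiv.Perm (Fin n)),
        (∀ i, IsImprimitiveSub (H i)) → IsRegularTuple H) ∧
    -- every (n-2)-tuple of imprimitive subgroups of Aₙ is regular
    (∀ H : Fin (n - 2) → Subgroup ↥(alternatingGroup (Fin n)),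
        (∀ i, IsImprimitiveSub ((H i).map (alternatingGroup (Fin n)).subtype)) →
        IsRegularTuple H) := by
  constructor
  · intro H hH
    choose a b p ha hb hab hp hpres using fun i => (hH i).exists_shape
    obtain ⟨f, hf, γ, c, hc, hinv⟩ := reach_univ hn hab ha hb (by omega) (by omega)
    choose g hg using fun i => (hp i).exists_perm (hf i (Finset.mem_univ _))
    refine ⟨g, (Subgroup.eq_bot_iff_forall _).2 fun h hh => ?_⟩
    refine eq_one_of_colors c (by omega) (hinv h fun i _ => ?_)
    obtain ⟨h', hh', rfl⟩ := Subgroup.mem_iInf.1 hh i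
    exact (hpres i h' hh').conj (hg i)
  · intro H hH
    choose a b p ha hb hab hp hpres using fun i => (hH i).exists_shape
    obtain ⟨f, hf, γ, c, hc, hinv⟩ := reach_univ hn hab ha hb (by omega) (by omega)
    choose g hg using fun i => (hp i).exists_even_perm (ha i) (hb i) (hf i (Finset.mem_univ _))
    refine ⟨g, (Subgroup.eq_bot_iff_forall _).2 fun h hh => ?_⟩
    refine Subtype.ext (eq_one_of_even c (by omega) (hinv h fun i _ => ?_)
      (Equiv.Perm.mem_alternatingGroup.1 h.2))
    obtain ⟨h', hh', rfl⟩ := Subgroup.mem_iInf.1 hh i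
    exact (hpres i h' ⟨h', hh', rfl⟩).conj (hg i)
end

section
/- Let G = S_n or G = A_n. For i = 1, 2 let a_i be a divisor of n with 1 < a_i < n, let X_i be an a_i-partition of [n], where a_1 ≥ a_2, and let H_i be the stabilizer of X_i in G. Let α, β ∈ [n] be distinct, and assume that either (i) 3 ≤ a_1 < n/2, or (ii) a_1 = n/2, a_2 ≥ 3, and α and β lie in different parts of X_1. Then there exists g ∈ G such that every element of H_1 ∩ g H_2 g^{-1} maps the set {α, β} to itself. -/
/-- The stabilizer in `Sym(Fin n)` of a partition of `Fin n`: the permutations mapping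
parts to parts. -/
def partStab {n : ℕ} (Parts : Set (Set (Fin n))) : Subgroup (Equiv.Perm (Fin n)) where
  carrier := {g | ∀ P : Set (Fin n), P ∈ Parts ↔ ⇑g '' P ∈ Parts}
  one_mem' := by intro P; simp
  mul_mem' := by
    intro a b ha hb P
    rw [hb P]
    simpa [Set.image_image] using ha (⇑b '' P)
  inv_mem' := by
    intro a ha P
    have key : ⇑a '' (⇑a⁻¹ '' P) = P := by
      simp [Set.image_image]
    have := ha (⇑a⁻¹ '' P)
    rw [key] at this
    exact this.symm

/-- `Parts` is a partition of `Fin n` all of whose parts have size `ℓ`. -/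
def IsUniformPartition {n : ℕ} (ℓ : ℕ) (Parts : Set (Set (Fin n))) : Prop :=
  Setoid.IsPartition Parts ∧ ∀ P ∈ Parts, P.ncard = ℓ

/-! ### Labelled partitions and the reduction to a model -/

/-- A partition into parts of size `ℓ` is the family of fibers of a labelling by `Fin k`. -/
theorem exists_label {n k ℓ : ℕ} {Parts : Set (Set (Fin n))} (hP : IsUniformPartition ℓ Parts)
    (hℓ : 0 < ℓ) (hn : n = k * ℓ) :
    ∃ f : Fin n → Fin k, (∀ i, Fintype.card {x // f x = i} = ℓ) ∧
      ∀ P, P ∈ Parts ↔ ∃ i, P = {x | f x = i} := by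
  classical
  obtain ⟨⟨h0, hex⟩, hcard⟩ := hP
  choose F hF using fun x => (hex x).exists
  have hFu : ∀ x P, P ∈ Parts → x ∈ P → P = F x := fun x P hP hx =>
    (hex x).unique ⟨hP, hx⟩ (hF x)
  let F' : Fin n → Parts := fun x => ⟨F x, (hF x).1⟩
  have hset : ∀ P : Parts, {x | F' x = P} = P.1 := by
    rintro ⟨P, hP⟩
    ext x
    simp only [Set.mem_ofPred_eq, F', Subtype.mk.injEq]
    exact ⟨fun h => h ▸ (hF x).2, fun h => (hFu x P hP h).symm⟩
  have hfib : ∀ P : Parts, Fintype.card {x // F' x = P} = ℓ := by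
    intro P
    rw [← hcard P.1 P.2, ← hset P, ← Nat.card_eq_fintype_card]
    rfl
  have hk : Fintype.card Parts = k := by
    have h1 := Fintype.card_congr (Equiv.sigmaFiberEquiv F')
    rw [Fintype.card_sigma, Finset.sum_congr rfl (fun P _ => hfib P)] at h1
    simp only [Finset.sum_const, Finset.card_univ, smul_eq_mul, Fintype.card_fin] at h1
    have h1 := h1.trans hn
    exact Nat.eq_of_mul_eq_mul_right hℓ h1
  let e : Parts ≃ Fin k := Fintype.equivFinOfCardEq hk
  refine ⟨fun x => e (F' x), fun i => ?_, fun P => ⟨fun hP => ⟨e ⟨P, hP⟩, ?_⟩, ?_⟩⟩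
  · rw [← hfib (e.symm i)]
    exact Fintype.card_congr (Equiv.subtypeEquivRight fun x => (Equiv.eq_symm_apply e).symm)
  · refine (hset ⟨P, hP⟩).symm.trans ?_
    ext x
    simp
  · rintro ⟨i, rfl⟩
    have := hset (e.symm i)
    have h2 : {x | e (F' x) = i} = (e.symm i).1 := by
      rw [← this]
      ext x
      exact (Equiv.eq_symm_apply e).symm
    rw [h2]
    exact (e.symm i).2

theorem partStab_label {n k : ℕ} {Parts : Set (Set (Fin n))} {f : Fin n → Fin k}
    (hf : ∀ P, P ∈ Parts ↔ ∃ i, P = {x | f x = i}) {g : Equiv.Perm (Fin n)}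
    (hg : g ∈ partStab Parts) (u v : Fin n) : f (g u) = f (g v) ↔ f u = f v := by
  have key : ∀ g ∈ partStab Parts, ∀ u v, f u = f v → f (g u) = f (g v) := by
    intro g hg u v huv
    obtain ⟨j, hj⟩ := (hf _).1 ((hg {x | f x = f u}).1 ((hf _).2 ⟨f u, rfl⟩))
    have hu : g u ∈ {x | f x = j} := hj ▸ Set.mem_image_of_mem g rfl
    have hv : g v ∈ {x | f x = j} := hj ▸ Set.mem_image_of_mem g huv.symm
    exact Eq.trans hu (Eq.symm hv)
  refine ⟨fun h => ?_, key g hg u v⟩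
  simpa using key g⁻¹ (inv_mem hg) _ _ h

theorem exists_perm_label {n : ℕ} {ι : Type*} [DecidableEq ι] (f f' : Fin n → ι)
    (h : ∀ i, Fintype.card {x // f x = i} = Fintype.card {x // f' x = i}) :
    ∃ e : Equiv.Perm (Fin n), ∀ x, f' (e x) = f x := by
  let E : ∀ i, {x // f x = i} ≃ {x // f' x = i} := fun i => Fintype.equivOfCardEq (h i)
  refine ⟨((Equiv.sigmaFiberEquiv f).symm.trans (Equiv.sigmaCongrRight E)).trans
    (Equiv.sigmaFiberEquiv f'), fun x => ?_⟩
  exact (E (f x) ⟨x, rfl⟩).2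

theorem exists_perm_pair {α : Type*} [DecidableEq α] {p q s t : α} (h : p = q ↔ s = t) :
    ∃ σ : Equiv.Perm α, σ p = s ∧ σ q = t := by
  by_cases hpq : p = q
  · exact ⟨Equiv.swap p s, by simp, by rw [← hpq, ← h.1 hpq]; simp⟩
  · have hst : s ≠ t := fun e => hpq (h.2 e)
    refine ⟨Equiv.swap (Equiv.swap p s q) t * Equiv.swap p s, ?_, by simp⟩
    have : s ≠ Equiv.swap p s q := by
      intro e
      have h2 : Equiv.swap p s p = Equiv.swap p s q := by simpa using e
      exact hpq ((Equiv.swap p s).injective h2)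
    simp [Equiv.swap_apply_of_ne_of_ne this hst]

/-- Two labellings with fibers of equal size are related by a permutation, which may be chosen to
carry `p`, `q` to `α`, `β`: permute the labels so that those of `p` and `q` become those of `α` and
`β`, then correct the images of `p` and `q` by transpositions inside fibers of `f'`. -/
theorem exists_perm_label_pair {n k : ℕ} (f f' : Fin n → Fin k)
    (h : ∀ i j, Fintype.card {x // f x = i} = Fintype.card {x // f' x = j})
    {p q α β : Fin n} (hpq : p ≠ q) (hαβ : α ≠ β) (hiff : f p = f q ↔ f' α = f' β) :
    ∃ e : Equiv.Perm (Fin n), (∀ u v, f' (e u) = f' (e v) ↔ f u = f v) ∧ e p = α ∧ e q = β := by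
  obtain ⟨σ, hσp, hσq⟩ := exists_perm_pair hiff
  obtain ⟨e, he⟩ := exists_perm_label (fun x => σ (f x)) f' (fun i => by
    rw [← h (σ.symm i) i]
    exact Fintype.card_congr (Equiv.subtypeEquivRight fun x => (Equiv.eq_symm_apply σ).symm))
  have hswap : ∀ y z, f' y = f' z → ∀ x, f' (Equiv.swap y z x) = f' x := by
    intro y z hyz x
    by_cases h1 : x = y
    · simp [h1, hyz]
    by_cases h2 : x = z
    · simp [h2, hyz]
    rw [Equiv.swap_apply_of_ne_of_ne h1 h2]
  let τ := Equiv.swap (e p) α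
  have hτ : ∀ x, f' (τ x) = f' x := hswap _ _ (by rw [he, hσp])
  let ρ := Equiv.swap (τ (e q)) β
  have hρ : ∀ x, f' (ρ x) = f' x := hswap _ _ (by rw [hτ, he, hσq])
  refine ⟨ρ * τ * e, fun u v => ?_, ?_, ?_⟩
  · simp [hρ, hτ, he]
  · have h1 : τ (e p) = α := Equiv.swap_apply_left _ _
    have h2 : α ≠ τ (e q) := by
      rw [← h1]
      exact fun h => hpq (e.injective (τ.injective h))
    simp only [Equiv.Perm.mul_apply, h1]
    exact Equiv.swap_apply_of_ne_of_ne h2 hαβ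
  · exact Equiv.swap_apply_left _ _

/-- Every permutation that preserves the fibers of `R` and the fibers of `C`, as partitions, maps
`{p, q}` to itself. -/
def CanonicalPair {n : ℕ} {ι κ : Type*} (R : Fin n → ι) (C : Fin n → κ) (p q : Fin n) : Prop :=
  ∀ h : Equiv.Perm (Fin n), (∀ u v, R (h u) = R (h v) ↔ R u = R v) →
    (∀ u v, C (h u) = C (h v) ↔ C u = C v) → h p ∈ ({p, q} : Set _) ∧ h q ∈ ({p, q} : Set _)

/-- A canonical pair in one model of two overlapping partitions, lying in a single row exactly when
`α` and `β` do, provides the conjugating element `g`. -/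
theorem reduction {n k m a c : ℕ} {G : Subgroup (Equiv.Perm (Fin n))}
    (hG : G = ⊤ ∨ G = alternatingGroup (Fin n)) (hc : 1 < c) (hm : 0 < m)
    {X₁ X₂ : Set (Set (Fin n))}
    {f₁ : Fin n → Fin k} (hf₁ : ∀ i, Fintype.card {x // f₁ x = i} = a)
    (hX₁ : ∀ P, P ∈ X₁ ↔ ∃ i, P = {x | f₁ x = i})
    {f₂ : Fin n → Fin m} (hf₂ : ∀ i, Fintype.card {x // f₂ x = i} = c)
    (hX₂ : ∀ P, P ∈ X₂ ↔ ∃ i, P = {x | f₂ x = i})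
    {α β : Fin n} (hαβ : α ≠ β)
    {R : Fin n → Fin k} (hR : ∀ i, Fintype.card {x // R x = i} = a)
    {C : Fin n → Fin m} (hC : ∀ i, Fintype.card {x // C x = i} = c)
    {p q : Fin n} (hpq : p ≠ q) (hiff : R p = R q ↔ f₁ α = f₁ β)
    (hcan : CanonicalPair R C p q) :
    ∃ g ∈ G, ∀ x ∈ (partStab X₁ ⊓ G) ⊓ conjSub g (partStab X₂ ⊓ G),
      ⇑x '' {α, β} = {α, β} := by
  obtain ⟨e, he, hep, heq⟩ := exists_perm_label_pair R f₁ (fun i j => by rw [hR, hf₁])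
    hpq hαβ hiff
  -- `g` carries the parts of `X₂` to the images under `e` of the columns of the model; a
  -- transposition of two points in one part of `X₂` adjusts the sign of `g`
  obtain ⟨g, hgG, hg⟩ : ∃ g ∈ G, ∀ x, f₂ (g⁻¹ (e x)) = C x := by
    obtain ⟨h, hh⟩ := exists_perm_label C f₂ (fun i => by rw [hC, hf₂])
    rcases hG with rfl | rfl
    · exact ⟨e * h⁻¹, trivial, fun x => by simp [hh]⟩
    · obtain ⟨y, z, hyz⟩ := Fintype.one_lt_card_iff.1 (by rw [hf₂ ⟨0, hm⟩]; exact hc)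
      have hyz' : y.1 ≠ z.1 := fun h => hyz (Subtype.ext h)
      have hfy : f₂ y.1 = f₂ z.1 := y.2.trans z.2.symm
      rcases Int.units_eq_one_or (Equiv.Perm.sign (e * h⁻¹)) with hs | hs
      · exact ⟨e * h⁻¹, hs, fun x => by simp [hh]⟩
      · refine ⟨e * h⁻¹ * Equiv.swap y.1 z.1, ?_, fun x => ?_⟩
        · rw [Equiv.Perm.mem_alternatingGroup, Equiv.Perm.sign_mul, hs,
            Equiv.Perm.sign_swap hyz']
          rfl
        · have : ∀ w, f₂ (Equiv.swap y.1 z.1 w) = f₂ w := by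
            intro w
            by_cases h1 : w = y.1
            · rw [h1, Equiv.swap_apply_left, hfy]
            by_cases h2 : w = z.1
            · rw [h2, Equiv.swap_apply_right, hfy]
            rw [Equiv.swap_apply_of_ne_of_ne h1 h2]
          simp [this, hh]
  refine ⟨g, hgG, ?_⟩
  rintro x ⟨⟨hx1, -⟩, y, ⟨hy, -⟩, hyx⟩
  have hyx' : x = g * y * g⁻¹ := by rw [← hyx]; rfl
  have hxR := partStab_label hX₁ hx1
  have hyC := partStab_label hX₂ hy
  have hcan' := hcan (e⁻¹ * x * e)
    (fun u v => by rw [← he, ← he]; simpa [he] using hxR (e u) (e v))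
    (fun u v => by
      rw [← hg, ← hg, ← hg, ← hg]
      simpa [hyx'] using hyC (g⁻¹ (e u)) (g⁻¹ (e v)))
  obtain ⟨h1, h2⟩ := hcan'
  simp only [Equiv.Perm.mul_apply, hep, heq, Set.mem_insert_iff, Set.mem_singleton_iff,
    Equiv.Perm.inv_eq_iff_eq] at h1 h2
  apply Set.eq_of_subset_of_ncard_le
  · rintro _ ⟨w, rfl | rfl, rfl⟩
    · simpa using h1
    · simpa using h2
  · rw [Set.ncard_image_of_injective _ x.injective]
  · exact Set.toFinite _

/-- If an index with at most `a` values tells the points of each fiber of `R` apart, then all fibers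
have size exactly `a`, because the `k` fibers have total size `k * a`. -/
theorem fiber_card {n k a : ℕ} (hn : n = k * a) {ι : Type*} (R : Fin n → Fin k) (I : Fin n → ι)
    (s : Finset ι) (hs : s.card ≤ a) (hI : ∀ x, I x ∈ s)
    (hinj : ∀ x y, R x = R y → I x = I y → x = y) (i : Fin k) :
    Fintype.card {x // R x = i} = a := by
  have hle : ∀ i, Fintype.card {x // R x = i} ≤ a := by
    intro i
    refine le_trans ?_ hs
    rw [← Fintype.card_coe s]
    exact Fintype.card_le_of_injective (fun x : {x // R x = i} => (⟨I x.1, hI _⟩ : s))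
      (fun x y h => Subtype.ext (hinj _ _ (x.2.trans y.2.symm) (congrArg Subtype.val h)))
  have hsum : ∑ i, Fintype.card {x // R x = i} = ∑ _i : Fin k, a := by
    rw [← Fintype.card_sigma, Fintype.card_congr (Equiv.sigmaFiberEquiv R)]
    simp [hn]
  exact (Finset.sum_eq_sum_iff_of_le (fun i _ => hle i)).1 hsum i (Finset.mem_univ i)

/-- A pair is canonical if it consists of all points with some property that is invariant under the
permutations preserving both partitions. -/
theorem canonicalPair_of_invariant {n : ℕ} {ι κ : Type*} {R : Fin n → ι} {C : Fin n → κ}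
    {p q : Fin n} (Φ : Fin n → Prop) (hp : Φ p) (hq : Φ q) (huniq : ∀ x, Φ x → x = p ∨ x = q)
    (hinv : ∀ h : Equiv.Perm (Fin n), (∀ u v, R (h u) = R (h v) ↔ R u = R v) →
      (∀ u v, C (h u) = C (h v) ↔ C u = C v) → ∀ x, Φ x → Φ (h x)) :
    CanonicalPair R C p q :=
  fun h hR hC => ⟨huniq _ (hinv h hR hC p hp), huniq _ (hinv h hR hC q hq)⟩

/-- There are a partition of `Fin n` into `k` rows of size `a`, a partition into `m` columns of size
`c`, and a canonical pair that lies in a single row if and only if `same` holds. -/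
def HasModel (n k m a c : ℕ) (same : Prop) : Prop :=
  ∃ (R : Fin n → Fin k) (C : Fin n → Fin m) (p q : Fin n),
    (∀ i, Fintype.card {x // R x = i} = a) ∧ (∀ i, Fintype.card {x // C x = i} = c) ∧
    p ≠ q ∧ (R p = R q ↔ same) ∧ CanonicalPair R C p q

/-- A model whose columns are the intervals of length `c` and whose rows are given by a word `W`;
`I p` plays the role of the position of `p` within its row. -/
theorem hasModel_of_word {n k m a c : ℕ} (same : Prop) (hc : 0 < c) (hnk : n = k * a)
    (hnm : n = m * c) (W I : ℕ → ℕ) (hW : ∀ p < n, W p < k) (hI : ∀ p < n, I p < a)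
    (hinj : ∀ p < n, ∀ q < n, W p = W q → I p = I q → p = q)
    (p q : Fin n) (hpq : p ≠ q) (hsame : W p = W q ↔ same)
    (hcan : CanonicalPair (fun x : Fin n => W x) (fun x : Fin n => x.val / c) p q) :
    HasModel n k m a c same := by
  refine ⟨fun x => ⟨W x, hW x x.2⟩, fun x => ⟨x.val / c, ?_⟩, p, q, ?_, ?_, hpq, ?_, ?_⟩
  · exact Nat.div_lt_of_lt_mul (by rw [mul_comm, ← hnm]; exact x.2)
  · refine fiber_card hnk _ (fun x => I x) (Finset.range a) (by simp)
      (fun x => Finset.mem_range.2 (hI x x.2)) (fun x y h1 h2 => Fin.ext ?_)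
    exact hinj x x.2 y y.2 (by simpa using h1) h2
  · refine fiber_card hnm _ (fun x => x.val % c) (Finset.range c) (by simp)
      (fun x => Finset.mem_range.2 (Nat.mod_lt _ hc)) (fun x y h1 h2 => Fin.ext ?_)
    have h1' : x.val / c = y.val / c := by simpa using h1
    rw [← Nat.div_add_mod x.val c, ← Nat.div_add_mod y.val c, h1', h2]
  · simpa using hsame
  · intro h hR hC
    exact hcan h (fun u v => by simpa using hR u v) (fun u v => by simpa using hC u v)

/-! ### Columns of size at least three, points in different rows -/

/-- The word `0^(c-1) K | 0 K^(c-1) | 0^(a-c) 1^a ⋯ (K-1)^a K^(a-c)`. -/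
def wordD (K a c p : ℕ) : ℕ :=
  if p < c - 1 then 0 else if p = c - 1 then K else if p = c then 0
  else if p < 2 * c then K else (p - c) / a

/-- An index in `{0, …, a-1}` that tells apart the positions of a given letter of `wordD`. -/
def idxD (a c p : ℕ) : ℕ :=
  if p < c - 1 then p else if p = c - 1 then a - c else if p = c then c - 1
  else if p < 2 * c then a - c + (p - c) else (p - c) % a

theorem wordD_lt {K a c p : ℕ} (hp : p < (K + 1) * a) : wordD K a c p < K + 1 := by
  have h : (p - c) / a < K + 1 := Nat.div_lt_of_lt_mul (by rw [mul_comm]; omega)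
  unfold wordD
  split_ifs <;> omega

theorem idxD_lt {a c p : ℕ} (hca : c ≤ a) (hc : 3 ≤ c) : idxD a c p < a := by
  have h : (p - c) % a < a := Nat.mod_lt _ (by omega)
  unfold idxD
  split_ifs <;> omega

theorem wordD_inj {K a c p q : ℕ} (hK : 1 ≤ K) (hca : c ≤ a) (hc : 3 ≤ c)
    (hp : p < (K + 1) * a) (hq : q < (K + 1) * a) (hW : wordD K a c p = wordD K a c q)
    (hI : idxD a c p = idxD a c q) : p = q := by
  have ha : 0 < a := by omega
  have key : ∀ p < (K + 1) * a, 2 * c ≤ p → ((p - c) / a = 0 → (p - c) % a = p - c) ∧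
      ((p - c) / a = K → (p - c) % a < a - c) := by
    intro p hp hcp
    have h1 := Nat.div_add_mod (p - c) a
    refine ⟨fun h => ?_, fun h => ?_⟩
    · rw [h] at h1; omega
    · rw [h, mul_comm] at h1
      rw [add_mul] at hp
      omega
  have h1 := Nat.div_add_mod (p - c) a
  have h2 := Nat.div_add_mod (q - c) a
  have kp := key p hp
  have kq := key q hq
  by_cases hp2 : 2 * c ≤ p <;> by_cases hq2 : 2 * c ≤ q
  · have e1 : wordD K a c p = (p - c) / a := by unfold wordD; split_ifs <;> omega
    have e2 : wordD K a c q = (q - c) / a := by unfold wordD; split_ifs <;> omega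
    have e3 : idxD a c p = (p - c) % a := by unfold idxD; split_ifs <;> omega
    have e4 : idxD a c q = (q - c) % a := by unfold idxD; split_ifs <;> omega
    have : p - c = q - c := by rw [← h1, ← h2, ← e1, ← e2, ← e3, ← e4, hW, hI]
    omega
  all_goals
    clear h1 h2
    unfold wordD at hW
    unfold idxD at hI
    split_ifs at hW hI <;> omega

theorem wordD_tail {K a c p : ℕ} (hc : 3 ≤ c) (hp : 2 * c ≤ p) :
    wordD K a c p = (p - c) / a := by
  unfold wordD; split_ifs <;> omega

theorem div_eq_iff' {c x i : ℕ} (hc : 0 < c) : x / c = i ↔ i * c ≤ x ∧ x < i * c + c := by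
  rw [Nat.div_eq_iff hc]
  constructor <;> rintro ⟨h1, h2⟩ <;> constructor <;> omega

/-- If `a + c` lies strictly inside the interval `[i * c, i * c + c)` and `2 * a` is a multiple of
`c`, then `a + c` is the midpoint of this interval. -/
theorem half_step {a c m i : ℕ} (hn : 2 * a = m * c) (h1 : i * c < a + c)
    (h2 : a + c < i * c + c) : 2 * (a + c) = 2 * (i * c) + c := by
  have e1 : (2 * i) * c = 2 * (i * c) := by ring
  have e2 : (m + 2) * c = m * c + 2 * c := by ring
  have e3 : (2 * i + 2) * c = 2 * (i * c) + 2 * c := by ring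
  have h3 : 2 * i < m + 2 := Nat.lt_of_mul_lt_mul_right (a := c) (by omega)
  have h4 : m + 2 < 2 * i + 2 := Nat.lt_of_mul_lt_mul_right (a := c) (by omega)
  have h5 : m + 2 = 2 * i + 1 := by omega
  have h6 : (m + 2) * c = (2 * i + 1) * c := by rw [h5]
  have e4 : (2 * i + 1) * c = 2 * (i * c) + c := by ring
  omega

/-- Let `x` be alone of its row in its column, and let this column contain a point `y` of another
row such that the rows of `x` and `y` also meet the column of `u`, which is not the column of `x`.
Then `x` is `c - 1` or `c`. In the sorted part of the word two rows share at most one column; the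
only other possibility would be that rows `0` and `K` share a column there, which forces `K = 1`,
and then each of them fills half of that column by `half_step`; if `c ≥ 3` a half has at least two
points. -/
theorem wordD_uniq {K a c m x y u v : ℕ} (hK : 1 ≤ K) (hca : c ≤ a) (hc : 3 ≤ c)
    (hn : (K + 1) * a = m * c) (hx : x < m * c) (hy : y < m * c) (hu : u < m * c)
    (hsing : ∀ z < m * c, wordD K a c z = wordD K a c x → z / c = x / c → z = x)
    (hxy : wordD K a c y ≠ wordD K a c x) (hyx : y / c = x / c) (huv : u / c = v / c)
    (hux : u / c ≠ x / c) (hRu : wordD K a c u = wordD K a c x)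
    (hRv : wordD K a c v = wordD K a c y) : x = c - 1 ∨ x = c := by
  have hc0 : 0 < c := by omega
  have ha0 : 0 < a := by omega
  have h2c : 2 * c ≤ m * c := by nlinarith
  by_cases hx2 : x < 2 * c
  · by_cases hx1 : x < c
    · left
      have hxc : x / c = 0 := Nat.div_eq_of_lt hx1
      by_contra hne
      have e0 := hsing 0 (by omega) (by unfold wordD; split_ifs <;> omega) (by simp [hxc])
      have e1 := hsing 1 (by omega) (by unfold wordD; split_ifs <;> omega)
        (by rw [hxc]; exact Nat.div_eq_of_lt (by omega))
      omega
    · right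
      have hxc : x / c = 1 := (div_eq_iff' hc0).2 (by omega)
      by_contra hne
      have e0 := hsing (c + 1) (by omega) (by unfold wordD; split_ifs <;> omega)
        (by rw [hxc]; exact (div_eq_iff' hc0).2 (by omega))
      have e1 := hsing (c + 2) (by omega) (by unfold wordD; split_ifs <;> omega)
        (by rw [hxc]; exact (div_eq_iff' hc0).2 (by omega))
      omega
  exfalso
  have hdiv : ∀ p, p / c < 2 ↔ p < 2 * c := fun p => Nat.div_lt_iff_lt_mul hc0
  have hy2 : ¬ y < 2 * c := by rw [← hdiv, hyx, hdiv]; exact hx2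
  have hWx := wordD_tail (K := K) (a := a) hc (not_lt.1 hx2)
  have hWy := wordD_tail (K := K) (a := a) hc (not_lt.1 hy2)
  have mono : ∀ p q, 2 * c ≤ p → p ≤ q → wordD K a c p ≤ wordD K a c q := by
    intro p q h1 h2
    rw [wordD_tail hc h1, wordD_tail hc (by omega)]
    exact Nat.div_le_div_right (by omega)
  have hlt : ∀ p q, p / c < q / c → p ≤ q := fun p q h => by
    by_contra hcon
    exact absurd (Nat.div_le_div_right (c := c) (not_le.1 hcon).le) (by omega)
  by_cases hu2 : 2 * c ≤ u
  · have hv2 : 2 * c ≤ v := by rw [← not_lt, ← hdiv, ← huv, hdiv]; omega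
    rcases lt_or_gt_of_ne hux with h | h
    · have h1 := mono u y hu2 (hlt _ _ (by omega))
      have h2 := mono v x hv2 (hlt _ _ (by omega))
      omega
    · have h1 := mono x v (by omega) (hlt _ _ (by omega))
      have h2 := mono y u (by omega) (hlt _ _ (by omega))
      omega
  · have hv2 : v < 2 * c := by rw [← hdiv, ← huv, hdiv]; omega
    have hval : ∀ p < 2 * c, wordD K a c p = 0 ∨ wordD K a c p = K := by
      intro p hp
      unfold wordD; split_ifs <;> omega
    have hvu := hval u (by omega)
    have hvv := hval v (by omega)
    have bx := (div_eq_iff' hc0).1 (rfl : x / c = x / c)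
    have byy := (div_eq_iff' hc0).1 hyx
    set i := x / c with hi
    by_cases hK1 : K = 1
    · subst hK1
      have dx : x < a + c ↔ (x - c) / a = 0 := by
        rw [Nat.div_eq_zero_iff]; omega
      have dy : y < a + c ↔ (y - c) / a = 0 := by
        rw [Nat.div_eq_zero_iff]; omega
      have him : (i + 1) * c ≤ m * c := Nat.mul_le_mul_right c (by
        rw [hi]; exact Nat.div_lt_of_lt_mul (by rw [mul_comm]; exact hx))
      rw [add_mul, one_mul] at him
      have hmid : i * c < a + c ∧ a + c < i * c + c := by
        constructor <;> omega
      -- the total length `2 * a` is a multiple of `c`, so `a` is a multiple of `c / 2`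
      have hhalf : 2 * (a + c) = 2 * (i * c) + c := by
        exact half_step (by omega) hmid.1 hmid.2
      have hz : ∀ z, i * c ≤ z → z < i * c + c → (z < a + c ↔ x < a + c) → z = x := by
        intro z h1 h2 h3
        refine hsing z (by omega) ?_ ((div_eq_iff' hc0).2 ⟨h1, h2⟩)
        have hz2 : 2 * c ≤ z := by
          have : i * c ≥ 2 * c := Nat.mul_le_mul_right c (by
            rw [hi]; exact (Nat.le_div_iff_mul_le hc0).2 (by omega))
          omega
        have dz : z < a + c ↔ (z - c) / a = 0 := by
          rw [Nat.div_eq_zero_iff]; omega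
        rw [wordD_tail hc hz2, hWx]
        have l1 := wordD_lt (K := 1) (a := a) (c := c) (p := z) (by omega)
        have l2 := wordD_lt (K := 1) (a := a) (c := c) (p := x) (by omega)
        rw [wordD_tail hc hz2] at l1
        rw [hWx] at l2
        generalize (z - c) / a = A at *
        generalize (x - c) / a = B at *
        omega
      by_cases hxa : x < a + c
      · have e1 := hz (i * c) (by omega) (by omega) (by omega)
        have e2 := hz (i * c + 1) (by omega) (by omega) (by omega)
        omega
      · have e1 := hz (a + c) (by omega) (by omega) (by omega)
        have e2 := hz (a + c + 1) (by omega) (by omega) (by omega)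
        omega
    · have hfar : ∀ s t, (s - c) / a = 0 → (t - c) / a = K → s + c ≤ t := by
        intro s t h1 h2
        rw [Nat.div_eq_zero_iff] at h1
        have h3 : 2 * a ≤ t - c := by
          have h4 : 2 ≤ (t - c) / a := by omega
          exact (Nat.le_div_iff_mul_le ha0).1 h4
        omega
      have f1 := hfar x y
      have f2 := hfar y x
      omega

theorem hasModel_D {K m a c : ℕ} (hK : 1 ≤ K) (hca : c ≤ a) (hc : 3 ≤ c)
    (hn : (K + 1) * a = m * c) : HasModel ((K + 1) * a) (K + 1) m a c False := by
  have hc0 : 0 < c := by omega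
  have h2c : 2 * c ≤ (K + 1) * a := by nlinarith
  have hW : ∀ p, p < c - 1 ∨ p = c → wordD K a c p = 0 := by
    intro p hp; unfold wordD; split_ifs <;> omega
  have hW' : ∀ p, p = c - 1 ∨ (c < p ∧ p < 2 * c) → wordD K a c p = K := by
    intro p hp; unfold wordD; split_ifs <;> omega
  have hd0 : ∀ p, p < c → p / c = 0 := fun p hp => Nat.div_eq_of_lt hp
  have hd1 : ∀ p, c ≤ p → p < 2 * c → p / c = 1 := fun p h1 h2 =>
    (div_eq_iff' hc0).2 (by omega)
  refine hasModel_of_word False hc0 rfl hn (wordD K a c) (idxD a c)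
    (fun p hp => wordD_lt hp) (fun p _ => idxD_lt hca hc)
    (fun p hp q hq => wordD_inj hK hca hc hp hq)
    ⟨c - 1, by omega⟩ ⟨c, by omega⟩ (fun h => by have := congrArg Fin.val h; simp at this; omega)
    ?_ ?_
  · simp only [iff_false]
    rw [hW' _ (Or.inl rfl), hW _ (Or.inr rfl)]
    omega
  refine canonicalPair_of_invariant
    (fun x => (∀ z : Fin ((K + 1) * a), wordD K a c z = wordD K a c x →
        z.val / c = x.val / c → z = x) ∧
      ∃ y u v : Fin ((K + 1) * a), wordD K a c y ≠ wordD K a c x ∧ y.val / c = x.val / c ∧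
        u.val / c = v.val / c ∧ u.val / c ≠ x.val / c ∧ wordD K a c u = wordD K a c x ∧
        wordD K a c v = wordD K a c y) ?_ ?_ ?_ ?_
  · refine ⟨fun z h1 h2 => Fin.ext ?_, ⟨0, by omega⟩, ⟨c + 1, by omega⟩, ⟨c, by omega⟩, ?_⟩
    · simp only at h1 h2 ⊢
      rw [hd0 (c - 1) (by omega)] at h2
      rw [hW' _ (Or.inl rfl)] at h1
      have hz : z.val < c := by rw [div_eq_iff' hc0] at h2; omega
      by_contra hne
      rw [hW _ (by omega)] at h1
      omega
    · simp only
      rw [hW 0 (by omega), hW' (c - 1) (by omega), hW' (c + 1) (by omega), hW c (by omega),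
        hd0 0 hc0, hd0 (c - 1) (by omega), hd1 (c + 1) (by omega) (by omega),
        hd1 c (by omega) (by omega)]
      omega
  · refine ⟨fun z h1 h2 => Fin.ext ?_, ⟨c + 1, by omega⟩, ⟨0, by omega⟩, ⟨c - 1, by omega⟩, ?_⟩
    · simp only at h1 h2 ⊢
      rw [hd1 c (by omega) (by omega)] at h2
      rw [hW _ (Or.inr rfl)] at h1
      have hz : c ≤ z.val ∧ z.val < 2 * c := by rw [div_eq_iff' hc0] at h2; omega
      by_contra hne
      rw [hW' _ (by omega)] at h1
      omega
    · simp only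
      rw [hW 0 (by omega), hW' (c - 1) (by omega), hW' (c + 1) (by omega), hW c (by omega),
        hd0 0 hc0, hd0 (c - 1) (by omega), hd1 (c + 1) (by omega) (by omega),
        hd1 c (by omega) (by omega)]
      omega
  · rintro x ⟨hs, y, u, v, h1, h2, h3, h4, h5, h6⟩
    have := wordD_uniq hK hca hc hn (hn ▸ x.2) (hn ▸ y.2) (hn ▸ u.2)
      (fun z hz e1 e2 => congrArg Fin.val (hs ⟨z, hn ▸ hz⟩ e1 e2)) h1 h2 h3 h4 h5 h6
    exact this.imp (fun h => Fin.ext h) (fun h => Fin.ext h)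
  · rintro h hR hC x ⟨hs, y, u, v, h1, h2, h3, h4, h5, h6⟩
    refine ⟨fun z e1 e2 => ?_, h y, h u, h v, ?_⟩
    · have := hs (h⁻¹ z) ((hR _ _).1 (by simpa using e1)) ((hC _ _).1 (by simpa using e2))
      rw [← this]; simp
    · exact ⟨fun e => h1 ((hR _ _).1 e), (hC _ _).2 h2, (hC _ _).2 h3,
        fun e => h4 ((hC _ _).1 e), (hR _ _).2 h5, (hR _ _).2 h6⟩

/-! ### Columns of size at least three, points in the same row -/

/-- The word `0^(c-2) 1 2 | 0 1^(c-1) | 0 2^(c-1) | (012)^(a-c) 3^a 4^a ⋯`. -/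
def wordS (a c p : ℕ) : ℕ :=
  if p < c - 2 then 0 else if p = c - 2 then 1 else if p = c - 1 then 2
  else if p = c then 0 else if p < 2 * c then 1
  else if p = 2 * c then 0 else if p < 3 * c then 2
  else if p < 3 * a then p % 3 else p / a

/-- An index in `{0, …, a-1}` that tells apart the positions of a given letter of `wordS`. -/
def idxS (a c p : ℕ) : ℕ :=
  if p < c - 2 then p else if p = c - 2 then 0 else if p = c - 1 then 0
  else if p = c then c - 2 else if p < 2 * c then p - c
  else if p = 2 * c then c - 1 else if p < 3 * c then p - 2 * c
  else if p < 3 * a then p / 3 else p % a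

theorem wordS_head {a c p : ℕ} (hp : p < 3 * a) : wordS a c p < 3 := by
  unfold wordS; split_ifs <;> omega

theorem wordS_mid {a c p : ℕ} (hc : 3 ≤ c) (hp : 3 * c ≤ p) (hpa : p < 3 * a) :
    wordS a c p = p % 3 := by
  unfold wordS; split_ifs <;> omega

theorem wordS_tail {a c p : ℕ} (hca : c ≤ a) (hc : 3 ≤ c) (hp : 3 * a ≤ p) :
    wordS a c p = p / a := by
  unfold wordS; split_ifs <;> omega

theorem three_le_div {a p : ℕ} (ha : 0 < a) : 3 ≤ p / a ↔ 3 * a ≤ p :=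
  Nat.le_div_iff_mul_le ha

theorem wordS_three_le {a c p : ℕ} (hca : c ≤ a) (hc : 3 ≤ c) :
    3 ≤ wordS a c p ↔ 3 * a ≤ p := by
  by_cases hp : 3 * a ≤ p
  · rw [wordS_tail hca hc hp, three_le_div (by omega)]
  · have := wordS_head (a := a) (c := c) (not_le.1 hp)
    omega

theorem wordS_lt {k a c p : ℕ} (hk : 3 ≤ k) (hca : c ≤ a) (hc : 3 ≤ c) (hp : p < k * a) :
    wordS a c p < k := by
  by_cases h : 3 * a ≤ p
  · rw [wordS_tail hca hc h]
    exact Nat.div_lt_of_lt_mul (by rw [mul_comm]; exact hp)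
  · have := wordS_head (a := a) (c := c) (not_le.1 h)
    omega

theorem idxS_lt {a c p : ℕ} (hca : c ≤ a) (hc : 3 ≤ c) : idxS a c p < a := by
  have h : p % a < a := Nat.mod_lt _ (by omega)
  unfold idxS
  split_ifs <;> omega

theorem wordS_idxS_head {a c p : ℕ} (hc : 3 ≤ c) (hp : p < 3 * a) :
    (p < c - 2 ∧ wordS a c p = 0 ∧ idxS a c p = p) ∨
    (p = c - 2 ∧ wordS a c p = 1 ∧ idxS a c p = 0) ∨
    (p = c - 1 ∧ wordS a c p = 2 ∧ idxS a c p = 0) ∨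
    (p = c ∧ wordS a c p = 0 ∧ idxS a c p = c - 2) ∨
    (c < p ∧ p < 2 * c ∧ wordS a c p = 1 ∧ idxS a c p = p - c) ∨
    (p = 2 * c ∧ wordS a c p = 0 ∧ idxS a c p = c - 1) ∨
    (2 * c < p ∧ p < 3 * c ∧ wordS a c p = 2 ∧ idxS a c p = p - 2 * c) ∨
    (3 * c ≤ p ∧ wordS a c p = p % 3 ∧ idxS a c p = p / 3) := by
  unfold wordS idxS
  split_ifs <;> simp <;> omega

theorem wordS_inj {a c p q : ℕ} (hca : c ≤ a) (hc : 3 ≤ c)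
    (hW : wordS a c p = wordS a c q) (hI : idxS a c p = idxS a c q) : p = q := by
  have tp := wordS_three_le (p := p) hca hc
  have tq := wordS_three_le (p := q) hca hc
  by_cases hp2 : 3 * a ≤ p
  · have hq2 : 3 * a ≤ q := by omega
    have e1 := wordS_tail hca hc hp2
    have e2 := wordS_tail hca hc hq2
    have e3 : idxS a c p = p % a := by unfold idxS; split_ifs <;> omega
    have e4 : idxS a c q = q % a := by unfold idxS; split_ifs <;> omega
    rw [← Nat.div_add_mod p a, ← Nat.div_add_mod q a, ← e1, ← e2, ← e3, ← e4, hW, hI]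
  · have sp := wordS_idxS_head (a := a) (p := p) hc (by omega)
    have sq := wordS_idxS_head (a := a) (p := q) hc (by omega)
    rw [hW, hI] at sp
    clear tp tq hW hI
    rcases sp with h | h | h | h | h | h | h | h <;>
      rcases sq with h' | h' | h' | h' | h' | h' | h' | h' <;> omega

theorem wordS_zero {a c p : ℕ} (hc : 3 ≤ c) (hp : p < c - 2 ∨ p = c ∨ p = 2 * c) :
    wordS a c p = 0 := by
  unfold wordS; split_ifs <;> omega

theorem wordS_one {a c p : ℕ} (hc : 3 ≤ c) (hp : p = c - 2 ∨ c < p ∧ p < 2 * c) :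
    wordS a c p = 1 := by
  unfold wordS; split_ifs <;> omega

theorem wordS_two {a c p : ℕ} (hc : 3 ≤ c) (hp : p = c - 1 ∨ 2 * c < p ∧ p < 3 * c) :
    wordS a c p = 2 := by
  unfold wordS; split_ifs <;> omega

/-- If `x` is alone of its row in its column and the rest of the column lies in a single row, that
of `s`, then `x` is `c` or `2 * c`, or else its column comes after the first three and reaches
beyond `3 * a`, and `x` is not in row `0`. Indeed a column contained in the periodic part
`(012)^(a-c)` meets three rows. -/
theorem wordS_cell {a c m x s : ℕ} (hca : c ≤ a) (hc : 3 ≤ c) (hx : x < m * c)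
    (hsing : ∀ z < m * c, wordS a c z = wordS a c x → z / c = x / c → z = x)
    (htwo : ∀ z < m * c, z / c = x / c → wordS a c z = wordS a c x ∨ wordS a c z = wordS a c s) :
    x = c ∨ x = 2 * c ∨ (3 * a < (x / c) * c + c ∧ wordS a c x ≠ 0 ∧ 3 * c ≤ x) := by
  have hc0 : 0 < c := by omega
  have hmc : (x / c) * c + c ≤ m * c := by
    have : (x / c + 1) * c ≤ m * c :=
      Nat.mul_le_mul_right c (Nat.div_lt_of_lt_mul (by rw [mul_comm]; exact hx))
    rwa [add_mul, one_mul] at this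
  have bx := (div_eq_iff' hc0).1 (rfl : x / c = x / c)
  have cell : ∀ z, (x / c) * c ≤ z → z < (x / c) * c + c →
      wordS a c z = wordS a c x ∨ wordS a c z = wordS a c s := fun z h1 h2 =>
    htwo z (by omega) ((div_eq_iff' hc0).2 ⟨h1, h2⟩)
  have sing : ∀ z, (x / c) * c ≤ z → z < (x / c) * c + c →
      wordS a c z = wordS a c x → z = x := fun z h1 h2 h3 =>
    hsing z (by omega) h3 ((div_eq_iff' hc0).2 ⟨h1, h2⟩)
  by_cases h1 : x < c
  · exfalso
    rw [Nat.div_eq_of_lt h1] at cell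
    have c0 := cell 0 (by omega) (by omega)
    have c1 := cell (c - 2) (by omega) (by omega)
    have c2 := cell (c - 1) (by omega) (by omega)
    have w0 : wordS a c 0 = 0 := wordS_zero hc (by omega)
    have w1 : wordS a c (c - 2) = 1 := wordS_one hc (by omega)
    have w2 : wordS a c (c - 1) = 2 := wordS_two hc (by omega)
    omega
  by_cases h2 : x < 2 * c
  · left
    by_contra hne
    rw [(div_eq_iff' hc0 (x := x) (i := 1)).2 (by omega)] at sing
    have wx : wordS a c x = 1 := wordS_one hc (by omega)
    have w1 : wordS a c (c + 1) = 1 := wordS_one hc (by omega)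
    have w2 : wordS a c (c + 2) = 1 := wordS_one hc (by omega)
    have s1 := sing (c + 1) (by omega) (by omega) (by omega)
    have s2 := sing (c + 2) (by omega) (by omega) (by omega)
    omega
  by_cases h3 : x < 3 * c
  · right; left
    by_contra hne
    rw [(div_eq_iff' hc0 (x := x) (i := 2)).2 (by omega)] at sing
    have wx : wordS a c x = 2 := wordS_two hc (by omega)
    have w1 : wordS a c (2 * c + 1) = 2 := wordS_two hc (by omega)
    have w2 : wordS a c (2 * c + 2) = 2 := wordS_two hc (by omega)
    have s1 := sing (2 * c + 1) (by omega) (by omega) (by omega)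
    have s2 := sing (2 * c + 2) (by omega) (by omega) (by omega)
    omega
  right; right
  have h3c : 3 * c ≤ (x / c) * c :=
    Nat.mul_le_mul_right c ((Nat.le_div_iff_mul_le hc0).2 (by omega))
  have touch : 3 * a < (x / c) * c + c := by
    by_contra hcon
    have c0 := cell ((x / c) * c) (by omega) (by omega)
    have c1 := cell ((x / c) * c + 1) (by omega) (by omega)
    have c2 := cell ((x / c) * c + 2) (by omega) (by omega)
    rw [wordS_mid hc (by omega) (by omega)] at c0 c1 c2
    omega
  refine ⟨touch, fun h0 => ?_, by omega⟩
  have hxa : x < 3 * a := by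
    by_contra hcon
    have := (wordS_three_le (p := x) hca hc).2 (by omega)
    omega
  have hx3 : x % 3 = 0 := by rw [← wordS_mid hc (by omega) hxa]; exact h0
  have c1 := cell (x + 1) (by omega) (by omega)
  have c2 := cell (x + 2) (by omega) (by omega)
  rw [wordS_mid hc (by omega) (by omega)] at c1 c2
  omega

/-- Two different columns reaching beyond `3 * a` cannot play the roles of the columns of `c` and
`2 * c`: the letters increase from one to the other, so `wordS a c x` lies strictly between those of
`s` and `s'`, and a column containing the three letters would contain the whole of row
`wordS a c x` together with one further point on each side, more than `c` points. -/
theorem wordS_tail_absurd {a c x y s s' t1 t2 t3 : ℕ} (hca : c ≤ a) (hc : 3 ≤ c)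
    (htx : 3 * a < (x / c) * c + c) (hlt : x / c < y / c)
    (hRy : wordS a c y = wordS a c x) (hs : s / c = x / c) (hs' : s' / c = y / c)
    (hRs : wordS a c s ≠ wordS a c x) (hRs' : wordS a c s' ≠ wordS a c x)
    (h12 : t1 / c = t2 / c) (h13 : t1 / c = t3 / c) (ht1 : wordS a c t1 = wordS a c x)
    (ht2 : wordS a c t2 = wordS a c s) (ht3 : wordS a c t3 = wordS a c s') : False := by
  have hc0 : 0 < c := by omega
  have ha0 : 0 < a := by omega
  have hjc : (x / c) * c + c ≤ (y / c) * c := by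
    have : (x / c + 1) * c ≤ (y / c) * c := Nat.mul_le_mul_right c hlt
    rwa [add_mul, one_mul] at this
  have bx := (div_eq_iff' hc0).1 (rfl : x / c = x / c)
  have byy := (div_eq_iff' hc0).1 (rfl : y / c = y / c)
  have bs := (div_eq_iff' hc0).1 hs
  have bs' := (div_eq_iff' hc0).1 hs'
  have b2 := (div_eq_iff' hc0).1 (h12.symm)
  have b3 := (div_eq_iff' hc0).1 (h13.symm)
  have three := fun p => wordS_three_le (p := p) hca hc
  have mono : ∀ p q, 3 * a ≤ p → p ≤ q → wordS a c p ≤ wordS a c q := by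
    intro p q h1 h2
    rw [wordS_tail hca hc h1, wordS_tail hca hc (by omega)]
    exact Nat.div_le_div_right (by omega)
  have hx3 : 3 * a ≤ x := by rw [← three, ← hRy, three]; omega
  have hr3 : 3 ≤ wordS a c x := (three x).2 hx3
  have hs'r : wordS a c x < wordS a c s' := lt_of_le_of_ne (mono _ _ hx3 (by omega)) hRs'.symm
  have hsr : wordS a c s < wordS a c x := by
    by_cases h : 3 * a ≤ s
    · exact lt_of_le_of_ne (hRy ▸ mono _ _ h (by omega)) hRs
    · have := wordS_head (a := a) (c := c) (not_le.1 h)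
      omega
  have l3 : (wordS a c x + 1) * a ≤ t3 := by
    have h3 : 3 * a ≤ t3 := by rw [← three]; omega
    rw [← Nat.le_div_iff_mul_le ha0, ← wordS_tail hca hc h3]
    omega
  have l2 : t2 < wordS a c x * a := by
    by_cases h : 3 * a ≤ t2
    · rw [← Nat.div_lt_iff_lt_mul ha0, ← wordS_tail hca hc h]
      omega
    · have := Nat.mul_le_mul_right a hr3
      omega
  rw [add_mul, one_mul] at l3
  omega

/-- The points `x` and `y` of one row are each alone of this row in their columns, which are filled
up by the rows of `s` and `s'` respectively. If these two rows differ and some column meets all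
three rows, then `x` is `c` or `2 * c`. -/
theorem wordS_uniq {a c m x y s s' t1 t2 t3 : ℕ} (hca : c ≤ a) (hc : 3 ≤ c)
    (hx : x < m * c) (hy : y < m * c)
    (hsx : ∀ z < m * c, wordS a c z = wordS a c x → z / c = x / c → z = x)
    (hsy : ∀ z < m * c, wordS a c z = wordS a c y → z / c = y / c → z = y)
    (htx : ∀ z < m * c, z / c = x / c → wordS a c z = wordS a c x ∨ wordS a c z = wordS a c s)
    (hty : ∀ z < m * c, z / c = y / c → wordS a c z = wordS a c y ∨ wordS a c z = wordS a c s')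
    (hRy : wordS a c y = wordS a c x) (hs : s / c = x / c) (hs' : s' / c = y / c)
    (hsm : s' < m * c)
    (hRs : wordS a c s ≠ wordS a c x) (hRs' : wordS a c s' ≠ wordS a c x)
    (hss : wordS a c s ≠ wordS a c s')
    (h12 : t1 / c = t2 / c) (h13 : t1 / c = t3 / c) (ht1 : wordS a c t1 = wordS a c x)
    (ht2 : wordS a c t2 = wordS a c s) (ht3 : wordS a c t3 = wordS a c s') :
    x = c ∨ x = 2 * c := by
  have w1 : wordS a c c = 0 := wordS_zero hc (by omega)
  have w2 : wordS a c (2 * c) = 0 := wordS_zero hc (by omega)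
  rcases wordS_cell hca hc hx hsx htx with h | h | ⟨tx, nx, -⟩
  · exact Or.inl h
  · exact Or.inr h
  exfalso
  rcases wordS_cell hca hc hy hsy hty with rfl | rfl | ⟨ty, ny, -⟩
  · omega
  · omega
  rcases lt_trichotomy (x / c) (y / c) with h | h | h
  · exact wordS_tail_absurd hca hc tx h hRy hs hs' hRs hRs' h12 h13 ht1 ht2 ht3
  · rcases htx s' hsm (hs'.trans h.symm) with h | h
    · exact hRs' h
    · exact hss h.symm
  · exact wordS_tail_absurd hca hc ty h hRy.symm hs' hs (hRy ▸ hRs') (hRy ▸ hRs) h13 h12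
      (ht1.trans hRy.symm) ht3 ht2

theorem hasModel_S {k m a c : ℕ} (hk : 3 ≤ k) (hca : c ≤ a) (hc : 3 ≤ c)
    (hn : k * a = m * c) : HasModel (k * a) k m a c True := by
  have hc0 : 0 < c := by omega
  have h3c : 3 * a ≤ k * a := Nat.mul_le_mul_right a hk
  have hw0 : ∀ p, p < c - 2 ∨ p = c ∨ p = 2 * c → wordS a c p = 0 :=
    fun p => wordS_zero hc
  have hw1 : ∀ p, p = c - 2 ∨ c < p ∧ p < 2 * c → wordS a c p = 1 :=
    fun p => wordS_one hc
  have hw2 : ∀ p, p = c - 1 ∨ 2 * c < p ∧ p < 3 * c → wordS a c p = 2 :=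
    fun p => wordS_two hc
  have hd0 : ∀ p, p < c → p / c = 0 := fun p hp => Nat.div_eq_of_lt hp
  have hd1 : ∀ p, p / c = 1 ↔ c ≤ p ∧ p < 2 * c := fun p => by
    rw [div_eq_iff' hc0]; omega
  have hd2 : ∀ p, p / c = 2 ↔ 2 * c ≤ p ∧ p < 3 * c := fun p => by
    rw [div_eq_iff' hc0]; omega
  have ew1 : wordS a c c = 0 := hw0 _ (by omega)
  have ew2 : wordS a c (2 * c) = 0 := hw0 _ (by omega)
  have ew3 : wordS a c (c + 1) = 1 := hw1 _ (by omega)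
  have ew4 : wordS a c (2 * c + 1) = 2 := hw2 _ (by omega)
  have ew5 : wordS a c 0 = 0 := hw0 _ (by omega)
  have ew6 : wordS a c (c - 2) = 1 := hw1 _ (by omega)
  have ew7 : wordS a c (c - 1) = 2 := hw2 _ (by omega)
  have ed1 : c / c = 1 := (hd1 _).2 (by omega)
  have ed2 : 2 * c / c = 2 := (hd2 _).2 (by omega)
  have ed3 : (c + 1) / c = 1 := (hd1 _).2 (by omega)
  have ed4 : (2 * c + 1) / c = 2 := (hd2 _).2 (by omega)
  have ed5 : 0 / c = 0 := hd0 _ (by omega)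
  have ed6 : (c - 2) / c = 0 := hd0 _ (by omega)
  have ed7 : (c - 1) / c = 0 := hd0 _ (by omega)
  have s1 : ∀ z : Fin (k * a), wordS a c z = wordS a c c → z.val / c = c / c → z.val = c := by
    intro z h1 h2
    rw [ew1] at h1
    rw [ed1, hd1] at h2
    by_contra hne
    rw [hw1 _ (by omega)] at h1
    omega
  have s2 : ∀ z : Fin (k * a), wordS a c z = wordS a c (2 * c) → z.val / c = 2 * c / c →
      z.val = 2 * c := by
    intro z h1 h2
    rw [ew2] at h1
    rw [ed2, hd2] at h2
    by_contra hne
    rw [hw2 _ (by omega)] at h1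
    omega
  have t1 : ∀ z : Fin (k * a), z.val / c = c / c →
      wordS a c z = wordS a c c ∨ wordS a c z = wordS a c (c + 1) := by
    intro z h2
    rw [ed1, hd1] at h2
    rw [ew1, ew3]
    rcases eq_or_ne z.val c with h | h
    · exact Or.inl (hw0 _ (by omega))
    · exact Or.inr (hw1 _ (by omega))
  have t2 : ∀ z : Fin (k * a), z.val / c = 2 * c / c →
      wordS a c z = wordS a c (2 * c) ∨ wordS a c z = wordS a c (2 * c + 1) := by
    intro z h2
    rw [ed2, hd2] at h2
    rw [ew2, ew4]
    rcases eq_or_ne z.val (2 * c) with h | h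
    · exact Or.inl (hw0 _ (by omega))
    · exact Or.inr (hw2 _ (by omega))
  refine hasModel_of_word True hc0 rfl hn (wordS a c) (idxS a c)
    (fun p hp => wordS_lt hk hca hc hp) (fun p _ => idxS_lt hca hc)
    (fun p hp q hq => wordS_inj hca hc)
    ⟨c, by omega⟩ ⟨2 * c, by omega⟩
    (fun h => by have := congrArg Fin.val h; simp at this; omega) ?_ ?_
  · simp only [iff_true]
    rw [ew1, ew2]
  refine canonicalPair_of_invariant
    (fun x => ∃ y s s' t1 t2 t3 : Fin (k * a),
      (∀ z : Fin (k * a), wordS a c z = wordS a c x → z.val / c = x.val / c → z = x) ∧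
      (∀ z : Fin (k * a), wordS a c z = wordS a c y → z.val / c = y.val / c → z = y) ∧
      (∀ z : Fin (k * a), z.val / c = x.val / c →
        wordS a c z = wordS a c x ∨ wordS a c z = wordS a c s) ∧
      (∀ z : Fin (k * a), z.val / c = y.val / c →
        wordS a c z = wordS a c y ∨ wordS a c z = wordS a c s') ∧
      wordS a c y = wordS a c x ∧ s.val / c = x.val / c ∧ s'.val / c = y.val / c ∧
      wordS a c s ≠ wordS a c x ∧ wordS a c s' ≠ wordS a c x ∧ wordS a c s ≠ wordS a c s' ∧
      t1.val / c = t2.val / c ∧ t1.val / c = t3.val / c ∧ wordS a c t1 = wordS a c x ∧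
      wordS a c t2 = wordS a c s ∧ wordS a c t3 = wordS a c s') ?_ ?_ ?_ ?_
  · refine ⟨⟨2 * c, by omega⟩, ⟨c + 1, by omega⟩, ⟨2 * c + 1, by omega⟩, ⟨0, by omega⟩,
      ⟨c - 2, by omega⟩, ⟨c - 1, by omega⟩, fun z h1 h2 => Fin.ext (s1 z h1 h2),
      fun z h1 h2 => Fin.ext (s2 z h1 h2), t1, t2, ?_⟩
    simp only
    omega
  · refine ⟨⟨c, by omega⟩, ⟨2 * c + 1, by omega⟩, ⟨c + 1, by omega⟩, ⟨0, by omega⟩,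
      ⟨c - 1, by omega⟩, ⟨c - 2, by omega⟩, fun z h1 h2 => Fin.ext (s2 z h1 h2),
      fun z h1 h2 => Fin.ext (s1 z h1 h2), t2, t1, ?_⟩
    simp only
    omega
  · rintro x ⟨y, s, s', t1, t2, t3, h1, h2, h3, h4, h5, h6, h7, h8, h9, h10, h11, h12, h13,
      h14, h15⟩
    have := wordS_uniq hca hc (hn ▸ x.2) (hn ▸ y.2)
      (fun z hz e1 e2 => congrArg Fin.val (h1 ⟨z, hn ▸ hz⟩ e1 e2))
      (fun z hz e1 e2 => congrArg Fin.val (h2 ⟨z, hn ▸ hz⟩ e1 e2))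
      (fun z hz e => h3 ⟨z, hn ▸ hz⟩ e) (fun z hz e => h4 ⟨z, hn ▸ hz⟩ e) h5 h6 h7
      (hn ▸ s'.2) h8 h9 h10 h11 h12 h13 h14 h15
    exact this.imp (fun h => Fin.ext h) (fun h => Fin.ext h)
  · rintro h hR hC x ⟨y, s, s', t1, t2, t3, h1, h2, h3, h4, h5, h6, h7, h8, h9, h10, h11, h12,
      h13, h14, h15⟩
    have sing : ∀ x : Fin (k * a), (∀ z : Fin (k * a), wordS a c z = wordS a c x →
        z.val / c = x.val / c → z = x) → ∀ z : Fin (k * a), wordS a c z = wordS a c (h x) →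
        z.val / c = (h x).val / c → z = h x := by
      intro x hx z e1 e2
      rw [← hx (h⁻¹ z) ((hR _ _).1 (by simpa using e1)) ((hC _ _).1 (by simpa using e2))]
      simp
    have two : ∀ x s : Fin (k * a), (∀ z : Fin (k * a), z.val / c = x.val / c →
        wordS a c z = wordS a c x ∨ wordS a c z = wordS a c s) →
        ∀ z : Fin (k * a), z.val / c = (h x).val / c →
        wordS a c z = wordS a c (h x) ∨ wordS a c z = wordS a c (h s) := by
      intro x s hx z e
      have := hx (h⁻¹ z) ((hC _ _).1 (by simpa using e))
      rw [← hR (h⁻¹ z) x, ← hR (h⁻¹ z) s] at this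
      simpa using this
    exact ⟨h y, h s, h s', h t1, h t2, h t3, sing x h1, sing y h2, two x s h3, two y s' h4,
      (hR _ _).2 h5, (hC _ _).2 h6, (hC _ _).2 h7, fun e => h8 ((hR _ _).1 e),
      fun e => h9 ((hR _ _).1 e), fun e => h10 ((hR _ _).1 e), (hC _ _).2 h11, (hC _ _).2 h12,
      (hR _ _).2 h13, (hR _ _).2 h14, (hR _ _).2 h15⟩

/-! ### Columns of size two -/

/-- The word `01 | 02 | 12 | 12 | 1^(a-3) 2^(a-3) 0^(a-2) 3^a 4^a ⋯`. -/
def wordE (a p : ℕ) : ℕ :=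
  if p = 0 ∨ p = 2 then 0 else if p = 1 ∨ p = 4 ∨ p = 6 then 1
  else if p = 3 ∨ p = 5 ∨ p = 7 then 2
  else if p < a + 5 then 1 else if p < 2 * a + 2 then 2 else if p < 3 * a then 0 else p / a

/-- An index in `{0, …, a-1}` that tells apart the positions of a given letter of `wordE`. -/
def idxE (a p : ℕ) : ℕ :=
  if p = 0 ∨ p = 1 ∨ p = 3 then 0 else if p = 2 ∨ p = 4 ∨ p = 5 then 1
  else if p = 6 ∨ p = 7 then 2
  else if p < a + 5 then p - 5 else if p < 2 * a + 2 then p - (a + 2)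
  else if p < 3 * a then p - 2 * a else p % a

theorem wordE_tail {a p : ℕ} (ha : 3 ≤ a) (hp : 3 * a ≤ p) : wordE a p = p / a := by
  unfold wordE; split_ifs <;> omega

theorem wordE_head {a p : ℕ} (hp : p < 3 * a) : wordE a p < 3 := by
  unfold wordE; split_ifs <;> omega

theorem wordE_three_le {a p : ℕ} (ha : 3 ≤ a) : 3 ≤ wordE a p ↔ 3 * a ≤ p := by
  by_cases hp : 3 * a ≤ p
  · rw [wordE_tail ha hp, three_le_div (by omega)]
  · have := wordE_head (not_le.1 hp)
    omega

theorem wordE_lt {k a p : ℕ} (hk : 3 ≤ k) (ha : 3 ≤ a) (hp : p < k * a) : wordE a p < k := by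
  by_cases h : 3 * a ≤ p
  · rw [wordE_tail ha h]
    exact Nat.div_lt_of_lt_mul (by rw [mul_comm]; exact hp)
  · have := wordE_head (not_le.1 h)
    omega

theorem idxE_lt {a p : ℕ} (ha : 3 ≤ a) : idxE a p < a := by
  have h : p % a < a := Nat.mod_lt _ (by omega)
  unfold idxE
  split_ifs <;> omega

theorem wordE_idxE_head {a p : ℕ} (hp : p < 3 * a) :
    (p = 0 ∧ wordE a p = 0 ∧ idxE a p = 0) ∨ (p = 1 ∧ wordE a p = 1 ∧ idxE a p = 0) ∨
    (p = 2 ∧ wordE a p = 0 ∧ idxE a p = 1) ∨ (p = 3 ∧ wordE a p = 2 ∧ idxE a p = 0) ∨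
    (p = 4 ∧ wordE a p = 1 ∧ idxE a p = 1) ∨ (p = 5 ∧ wordE a p = 2 ∧ idxE a p = 1) ∨
    (p = 6 ∧ wordE a p = 1 ∧ idxE a p = 2) ∨ (p = 7 ∧ wordE a p = 2 ∧ idxE a p = 2) ∨
    (8 ≤ p ∧ p < a + 5 ∧ wordE a p = 1 ∧ idxE a p = p - 5) ∨
    (a + 5 ≤ p ∧ p < 2 * a + 2 ∧ wordE a p = 2 ∧ idxE a p = p - (a + 2)) ∨
    (2 * a + 2 ≤ p ∧ wordE a p = 0 ∧ idxE a p = p - 2 * a) := by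
  by_cases h8 : p < 8
  · clear hp
    interval_cases p <;> simp [wordE, idxE]
  have e1 : wordE a p = if p < a + 5 then 1 else if p < 2 * a + 2 then 2 else 0 := by
    unfold wordE; split_ifs <;> omega
  have e2 : idxE a p = if p < a + 5 then p - 5 else if p < 2 * a + 2 then p - (a + 2)
      else p - 2 * a := by
    unfold idxE; split_ifs <;> omega
  iterate 8 right
  rw [e1, e2]
  split_ifs <;> simp <;> omega

theorem wordE_inj {a p q : ℕ} (ha : 3 ≤ a)
    (hW : wordE a p = wordE a q) (hI : idxE a p = idxE a q) : p = q := by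
  have tp := wordE_three_le (p := p) ha
  have tq := wordE_three_le (p := q) ha
  by_cases hp2 : 3 * a ≤ p
  · have hq2 : 3 * a ≤ q := by omega
    have e1 := wordE_tail ha hp2
    have e2 := wordE_tail ha hq2
    have e3 : idxE a p = p % a := by unfold idxE; split_ifs <;> omega
    have e4 : idxE a q = q % a := by unfold idxE; split_ifs <;> omega
    rw [← Nat.div_add_mod p a, ← Nat.div_add_mod q a, ← e1, ← e2, ← e3, ← e4, hW, hI]
  · have hq2 : ¬ 3 * a ≤ q := by omega
    have sp := wordE_idxE_head (a := a) (p := p) (by omega)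
    have sq := wordE_idxE_head (a := a) (p := q) (by omega)
    rw [hW, hI] at sp
    clear tp tq hW hI
    rcases sp with h | h | h | h | h | h | h | h | h | h | h <;>
      rcases sq with h' | h' | h' | h' | h' | h' | h' | h' | h' | h' | h' <;> omega

/-- The columns meeting two rows: `01` and `02` at the start, columns `12`, and columns ending beyond
`3 * a`, none of which meets row `1` or row `2`. -/
theorem wordE_mixed {a p q : ℕ} (ha : 3 ≤ a) (hpq : p / 2 = q / 2) (hlt : p < q)
    (hne : wordE a p ≠ wordE a q) :
    p % 2 = 0 ∧ q = p + 1 ∧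
    ((p = 0 ∧ wordE a p = 0 ∧ wordE a q = 1) ∨ (p = 2 ∧ wordE a p = 0 ∧ wordE a q = 2) ∨
      (wordE a p = 1 ∧ wordE a q = 2) ∨
      (3 * a ≤ q ∧ 3 ≤ wordE a q ∧ wordE a p < wordE a q ∧ wordE a p ≠ 1 ∧ wordE a p ≠ 2)) := by
  have hq : q = p + 1 := by omega
  have hp : p % 2 = 0 := by omega
  refine ⟨hp, hq, ?_⟩
  by_cases h : 3 * a ≤ q
  · right; right; right
    have h3 := (wordE_three_le ha).2 h
    by_cases h' : 3 * a ≤ p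
    · have h3' := (wordE_three_le ha).2 h'
      have : wordE a p ≤ wordE a q := by
        rw [wordE_tail ha h, wordE_tail ha h']
        exact Nat.div_le_div_right hlt.le
      omega
    · have : wordE a p = 0 := by unfold wordE; split_ifs <;> omega
      omega
  · have sp := wordE_idxE_head (a := a) (p := p) (by omega)
    have sq := wordE_idxE_head (a := a) (p := q) (by omega)
    clear hpq
    rcases sp with h | h | h | h | h | h | h | h | h | h | h <;>
      rcases sq with h' | h' | h' | h' | h' | h' | h' | h' | h' | h' | h' <;> omega

theorem wordE_repeat_aux {a u u' v v' : ℕ} (ha : 3 ≤ a) (hu : u / 2 = u' / 2)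
    (hv : v / 2 = v' / 2) (huv : u / 2 < v / 2) (h1 : wordE a v = wordE a u)
    (h2 : wordE a v' = wordE a u') (hne : wordE a u ≠ wordE a u') (huu : u < u') :
    wordE a u = 1 ∧ wordE a u' = 2 := by
  have hm := wordE_mixed ha hu huu hne
  have mono : ∀ p q, 3 * a ≤ p → p ≤ q → wordE a p ≤ wordE a q := by
    intro p q h1 h2
    rw [wordE_tail ha h1, wordE_tail ha (by omega)]
    exact Nat.div_le_div_right (by omega)
  have m1 := mono u' v
  have m2 := mono u' v'
  rcases lt_or_gt_of_ne (a := v) (b := v') (by rintro rfl; omega) with h | h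
  · have hm' := wordE_mixed ha hv h (by omega)
    omega
  · have hm' := wordE_mixed ha hv.symm h (by omega)
    omega

/-- Two different rows that meet in two different columns, those of `u, u'` and of `v, v'`, are
rows `1` and `2`. -/
theorem wordE_repeat {a u u' v v' : ℕ} (ha : 3 ≤ a) (hu : u / 2 = u' / 2)
    (hv : v / 2 = v' / 2) (huv : u / 2 ≠ v / 2) (h1 : wordE a v = wordE a u)
    (h2 : wordE a v' = wordE a u') (hne : wordE a u ≠ wordE a u') :
    (wordE a u = 1 ∧ wordE a u' = 2) ∨ (wordE a u = 2 ∧ wordE a u' = 1) := by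
  rcases lt_or_gt_of_ne huv with h | h
  · rcases lt_or_gt_of_ne (a := u) (b := u') (by rintro rfl; omega) with h' | h'
    · exact Or.inl (wordE_repeat_aux ha hu hv h h1 h2 hne h')
    · exact Or.inr (wordE_repeat_aux ha hu.symm hv.symm (by omega) h2 h1 hne.symm h').symm
  · rcases lt_or_gt_of_ne (a := v) (b := v') (by rintro rfl; omega) with h' | h'
    · have := wordE_repeat_aux ha hv hu h h1.symm h2.symm (by omega) h'
      omega
    · have := wordE_repeat_aux ha hv.symm hu.symm (by omega) h2.symm h1.symm (by omega) h'
      omega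

/-- The only columns joining a row other than `1` and `2` to row `1` or row `2` are the first two. -/
theorem wordE_partner {a x s : ℕ} (ha : 3 ≤ a) (hs : s / 2 = x / 2)
    (hne : wordE a s ≠ wordE a x) (hx1 : wordE a x ≠ 1) (hx2 : wordE a x ≠ 2) :
    (wordE a s = 1 → x = 0) ∧ (wordE a s = 2 → x = 2) := by
  rcases lt_or_gt_of_ne (a := s) (b := x) (by rintro rfl; omega) with h | h
  · have := wordE_mixed ha hs h hne
    omega
  · have := wordE_mixed ha hs.symm h hne.symm
    omega

theorem wordE_uniq {a x s u u' v v' : ℕ} (ha : 3 ≤ a) (hs : s / 2 = x / 2)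
    (hRs : wordE a s ≠ wordE a x) (hu : u / 2 = u' / 2) (hv : v / 2 = v' / 2)
    (huv : u / 2 ≠ v / 2) (h1 : wordE a u = wordE a s) (h2 : wordE a v = wordE a s)
    (h3 : wordE a v' = wordE a u') (h4 : wordE a u' ≠ wordE a x)
    (h5 : wordE a u' ≠ wordE a s) : x = 0 ∨ x = 2 := by
  have hr := wordE_repeat ha hu hv huv (by omega) h3 (by omega)
  have hp := wordE_partner ha hs hRs (by omega) (by omega)
  omega

/-- The position `x` is completed in its column by a position `s` of another row, and some row
different from both of these meets the row of `s` in two different columns. -/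
def ApexE {n : ℕ} (a : ℕ) (x : Fin n) : Prop :=
  ∃ s u u' v v' : Fin n, s.val / 2 = x.val / 2 ∧ wordE a s ≠ wordE a x ∧
    u.val / 2 = u'.val / 2 ∧ v.val / 2 = v'.val / 2 ∧ u.val / 2 ≠ v.val / 2 ∧
    wordE a u = wordE a s ∧ wordE a v = wordE a s ∧ wordE a v' = wordE a u' ∧
    wordE a u' ≠ wordE a x ∧ wordE a u' ≠ wordE a s

theorem ApexE.map {n a : ℕ} {h : Equiv.Perm (Fin n)}
    (hR : ∀ u v : Fin n, wordE a (h u) = wordE a (h v) ↔ wordE a u = wordE a v)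
    (hC : ∀ u v : Fin n, (h u).val / 2 = (h v).val / 2 ↔ u.val / 2 = v.val / 2) {x : Fin n}
    (hx : ApexE a x) : ApexE a (h x) := by
  obtain ⟨s, u, u', v, v', hx⟩ := hx
  refine ⟨h s, h u, h u', h v, h v', ?_⟩
  simpa only [ne_eq, hR, hC] using hx

theorem ApexE.eq {n a : ℕ} (ha : 3 ≤ a) {x : Fin n} (hx : ApexE a x) :
    x.val = 0 ∨ x.val = 2 := by
  obtain ⟨s, u, u', v, v', h1, h2, h3, h4, h5, h6, h7, h8, h9, h10⟩ := hx
  exact wordE_uniq ha h1 h2 h3 h4 h5 h6 h7 h8 h9 h10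

theorem wordE_values (a : ℕ) : wordE a 0 = 0 ∧ wordE a 1 = 1 ∧ wordE a 2 = 0 ∧ wordE a 3 = 2 ∧
    wordE a 4 = 1 ∧ wordE a 5 = 2 ∧ wordE a 6 = 1 ∧ wordE a 7 = 2 := by
  simp [wordE]

theorem apexE_zero_two {n a : ℕ} (hn : 9 ≤ n) :
    ApexE a (⟨0, by omega⟩ : Fin n) ∧ ApexE a (⟨2, by omega⟩ : Fin n) := by
  have hv := wordE_values a
  refine ⟨⟨⟨1, by omega⟩, ⟨4, by omega⟩, ⟨5, by omega⟩, ⟨6, by omega⟩, ⟨7, by omega⟩, ?_⟩,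
    ⟨⟨3, by omega⟩, ⟨5, by omega⟩, ⟨4, by omega⟩, ⟨7, by omega⟩, ⟨6, by omega⟩, ?_⟩⟩ <;>
    simp [hv]

theorem hasModel_E_same {k m a : ℕ} (hk : 3 ≤ k) (ha : 3 ≤ a) (hn : k * a = m * 2) :
    HasModel (k * a) k m a 2 True := by
  have h9 : 9 ≤ k * a := Nat.mul_le_mul hk ha
  have hv := wordE_values a
  refine hasModel_of_word True two_pos rfl hn (wordE a) (idxE a)
    (fun p hp => wordE_lt hk ha hp) (fun p _ => idxE_lt ha)
    (fun p _ q _ => wordE_inj ha) ⟨0, by omega⟩ ⟨2, by omega⟩ (by simp) (by simp [hv]) ?_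
  exact canonicalPair_of_invariant (ApexE a) (apexE_zero_two h9).1 (apexE_zero_two h9).2
    (fun x hx => (hx.eq ha).imp (fun h => Fin.ext h) (fun h => Fin.ext h))
    (fun h hR hC x hx => hx.map hR hC)

theorem hasModel_E_diff {k m a : ℕ} (hk : 3 ≤ k) (ha : 3 ≤ a) (hn : k * a = m * 2) :
    HasModel (k * a) k m a 2 False := by
  have h9 : 9 ≤ k * a := Nat.mul_le_mul hk ha
  have hv := wordE_values a
  refine hasModel_of_word False two_pos rfl hn (wordE a) (idxE a)
    (fun p hp => wordE_lt hk ha hp) (fun p _ => idxE_lt ha)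
    (fun p _ q _ => wordE_inj ha) ⟨1, by omega⟩ ⟨3, by omega⟩ (by simp) (by simp [hv]) ?_
  refine canonicalPair_of_invariant
    (fun x => ∃ w, ApexE a w ∧ w.val / 2 = x.val / 2 ∧ w ≠ x)
    ⟨_, (apexE_zero_two h9).1, by simp, by simp⟩ ⟨_, (apexE_zero_two h9).2, by simp, by simp⟩
    ?_ ?_
  · rintro x ⟨w, hw, h1, h2⟩
    have h3 := hw.eq ha
    have h4 : w.val ≠ x.val := fun h => h2 (Fin.ext h)
    have h5 : x.val = 1 ∨ x.val = 3 := by omega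
    exact h5.imp (fun h => Fin.ext h) (fun h => Fin.ext h)
  · rintro h hR hC x ⟨w, hw, h1, h2⟩
    exact ⟨h w, hw.map hR hC, (hC _ _).2 h1, fun e => h2 (h.injective e)⟩

/-! ### Conclusion -/

theorem partition_stabilizers_fix_a_pair (n : ℕ) (G : Subgroup (Equiv.Perm (Fin n)))
    (hG : G = ⊤ ∨ G = alternatingGroup (Fin n))
    (a₁ a₂ : ℕ) (ha₁ : a₁ ∣ n) (ha₂ : a₂ ∣ n)
    (h1a₁ : 1 < a₁) (ha₁n : a₁ < n) (h1a₂ : 1 < a₂) (ha₂n : a₂ < n)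
    (hle : a₂ ≤ a₁)
    (X₁ X₂ : Set (Set (Fin n)))
    (hX₁ : IsUniformPartition a₁ X₁) (hX₂ : IsUniformPartition a₂ X₂)
    (α β : Fin n) (hαβ : α ≠ β)
    (hcase : (3 ≤ a₁ ∧ 2 * a₁ < n) ∨
      (2 * a₁ = n ∧ 3 ≤ a₂ ∧ ∀ P ∈ X₁, ¬ (α ∈ P ∧ β ∈ P))) :
    ∃ g ∈ G, ∀ x ∈ (partStab X₁ ⊓ G) ⊓ conjSub g (partStab X₂ ⊓ G),
      ⇑x '' {α, β} = {α, β} := by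
  obtain ⟨k, hk⟩ := ha₁
  obtain ⟨m, hm⟩ := ha₂
  rw [mul_comm] at hk hm
  obtain ⟨f₁, hf₁, hP₁⟩ := exists_label hX₁ (by omega) hk
  obtain ⟨f₂, hf₂, hP₂⟩ := exists_label hX₂ (by omega) hm
  have hm0 : 0 < m := by
    rcases Nat.eq_zero_or_pos m with rfl | h
    · omega
    · exact h
  have hk2 : 2 ≤ k := by
    by_contra hcon
    have : k * a₁ ≤ 1 * a₁ := Nat.mul_le_mul_right a₁ (by omega)
    omega
  -- with two rows only the case of different rows and `a₂ ≥ 3` occurs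
  have hmodel : HasModel n k m a₁ a₂ (f₁ α = f₁ β) := by
    obtain ⟨K, rfl⟩ : ∃ K, k = K + 1 := ⟨k - 1, by omega⟩
    subst hk
    by_cases hsame : f₁ α = f₁ β
    · simp only [hsame]
      rcases hcase with ⟨h3, hlt⟩ | ⟨-, -, hdiff⟩
      · have hk3 : 3 ≤ K + 1 := Nat.lt_of_mul_lt_mul_right hlt
        rcases Nat.lt_or_ge a₂ 3 with h | h
        · obtain rfl : a₂ = 2 := by omega
          exact hasModel_E_same hk3 h3 hm
        · exact hasModel_S hk3 hle h hm
      · exact absurd ⟨hsame, rfl⟩ (hdiff {x | f₁ x = f₁ β} ((hP₁ _).2 ⟨_, rfl⟩))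
    · simp only [hsame]
      rcases Nat.lt_or_ge a₂ 3 with h | h
      · obtain rfl : a₂ = 2 := by omega
        rcases hcase with ⟨h3, hlt⟩ | ⟨-, h3, -⟩
        · exact hasModel_E_diff (Nat.lt_of_mul_lt_mul_right hlt) h3 hm
        · omega
      · exact hasModel_D (by omega) hle h hm
  obtain ⟨R, C, p, q, hR, hC, hpq, hiff, hcan⟩ := hmodel
  exact reduction hG h1a₂ hm0 hf₁ hP₁ hf₂ hP₂ hαβ hR hC hpq hiff hcan
end
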